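/- arXiv:1904.00538 — 2 statements merged into one kernel-verified Lean document; each statement's English description precedes it below -/
import Mathlib

section
/- There exist a constant C > 0 and M₀ such that for all m ≥ M₀ and all n ≥ m - 1 + ⌊m^{2/3}⌋, every mechanism J on tie-free profiles that is both ordinal and truthful satisfies ratio_U(J) ≤ C · m^{-2/3}; equivalently, there exists a tie-free profile u ∈ U^n with E[Wel(J(u),u)] ≤ C · m^{-2/3} · Wel(RV(u),u). -/
open Finset

/-- A normalized preference function: maps into `[0,1]` and attains both `0` and `1`. -/
def IsPref {m : ℕ} (u : Fin m → ℝ) : Prop :=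
  (∀ j, 0 ≤ u j ∧ u j ≤ 1) ∧ (∃ j, u j = 0) ∧ (∃ j, u j = 1)

/-- A tie-free normalized preference function. -/
def IsPrefU {m : ℕ} (u : Fin m → ℝ) : Prop :=
  IsPref u ∧ Function.Injective u

/-- A profile of normalized preference functions. -/
def IsProfile {n m : ℕ} (u : Fin n → Fin m → ℝ) : Prop :=
  ∀ i, IsPref (u i)

/-- A tie-free profile. -/
def IsProfileU {n m : ℕ} (u : Fin n → Fin m → ℝ) : Prop :=
  ∀ i, IsPrefU (u i)

/-- `p` is a probability distribution over the `m` candidates. -/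
def IsDist {m : ℕ} (p : Fin m → ℝ) : Prop :=
  (∀ j, 0 ≤ p j) ∧ ∑ j, p j = 1

/-- Social welfare of candidate `j` under profile `u`. -/
def Wel {n m : ℕ} (j : Fin m) (u : Fin n → Fin m → ℝ) : ℝ :=
  ∑ i, u i j

/-- Range voting: the candidate of maximal social welfare, ties broken
toward the smaller index. -/
noncomputable def RV {n m : ℕ} (hm : 0 < m) (u : Fin n → Fin m → ℝ) : Fin m :=
  (Finset.univ.filter fun j => ∀ j', Wel j' u ≤ Wel j u).min' (by
    obtain ⟨j, -, hj⟩ := Finset.exists_max_image (Finset.univ : Finset (Fin m))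
      (fun j => Wel j u) ⟨⟨0, hm⟩, Finset.mem_univ _⟩
    exact ⟨j, Finset.mem_filter.2 ⟨Finset.mem_univ _, fun j' => hj j' (Finset.mem_univ _)⟩⟩)

/-- Expected social welfare of a randomized mechanism `J` (given as the map
sending a profile to the probability of each candidate winning). -/
noncomputable def expWel {n m : ℕ} (J : (Fin n → Fin m → ℝ) → Fin m → ℝ)
    (u : Fin n → Fin m → ℝ) : ℝ :=
  ∑ j, J u j * Wel j u

/-- Rank of candidate `j` in preference `v`, ties broken in favor of the
smaller candidate index (the most preferred candidate has rank 1). -/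
noncomputable def rnk {m : ℕ} (v : Fin m → ℝ) (j : Fin m) : ℕ :=
  (Finset.univ.filter fun j' => v j < v j' ∨ (v j' = v j ∧ j' ≤ j)).card

/-- The mechanism `J^{1,q}`: pick a voter uniformly at random, then a winner
uniformly at random among that voter's `q` most preferred candidates. -/
noncomputable def Jone (q : ℕ) {n m : ℕ} (u : Fin n → Fin m → ℝ) : Fin m → ℝ :=
  fun j => (∑ i : Fin n, if rnk (u i) j ≤ q then ((q : ℝ))⁻¹ else 0) / (n : ℝ)

/-- `⌊m^{1/3}⌋`. -/
noncomputable def mroot3 (m : ℕ) : ℕ := ⌊(m : ℝ) ^ ((1 : ℝ)/3)⌋₊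

/-- The mechanism `J*`, running `J^{1,1}` and `J^{1,⌊m^{1/3}⌋}` each with
probability `1/2`. -/
noncomputable def Jstar {n m : ℕ} (u : Fin n → Fin m → ℝ) : Fin m → ℝ :=
  fun j => (Jone 1 u j + Jone (mroot3 m) u j) / 2

/-- Voter with preference `v` prefers `j₀` to `j₁` (ties toward the smaller
candidate index). -/
def Prefers {m : ℕ} (v : Fin m → ℝ) (j₀ j₁ : Fin m) : Prop :=
  v j₁ < v j₀ ∨ (v j₀ = v j₁ ∧ j₀ < j₁)

noncomputable instance {m : ℕ} (v : Fin m → ℝ) (j₀ j₁ : Fin m) :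
    Decidable (Prefers v j₀ j₁) := by unfold Prefers; infer_instance

/-- The mechanism `J^{2,q}`: pick two distinct candidates uniformly at random,
let each voter vote for the one it prefers; if one of the two gets at least `q`
votes it wins, otherwise the winner is one of the two by a fair coin. -/
noncomputable def Jtwo (q : ℕ) {n m : ℕ} (u : Fin n → Fin m → ℝ) : Fin m → ℝ :=
  fun j =>
    (∑ j₀ : Fin m, ∑ j₁ : Fin m,
      if j₀ = j₁ then 0
      else
        if q ≤ (Finset.univ.filter fun i => Prefers (u i) j₀ j₁).card then
          (if j = j₀ then (1 : ℝ) else 0)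
        else if q ≤ n - (Finset.univ.filter fun i => Prefers (u i) j₀ j₁).card then
          (if j = j₁ then (1 : ℝ) else 0)
        else ((if j = j₀ then (1 : ℝ)/2 else 0) + (if j = j₁ then (1 : ℝ)/2 else 0)))
      / ((m * (m - 1) : ℕ) : ℝ)

/-- `J` assigns a probability distribution to every tie-free profile. -/
def MechU {n m : ℕ} (J : (Fin n → Fin m → ℝ) → Fin m → ℝ) : Prop :=
  ∀ u, IsProfileU u → IsDist (J u)

/-- Truthfulness (on tie-free profiles). -/
def Truthful {n m : ℕ} (J : (Fin n → Fin m → ℝ) → Fin m → ℝ) : Prop :=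
  ∀ u, IsProfileU u → ∀ (i : Fin n) (v : Fin m → ℝ), IsPrefU v →
    ∑ j, J (Function.update u i v) j * u i j ≤ ∑ j, J u j * u i j

/-- Ordinality (on tie-free profiles). -/
def OrdinalMech {n m : ℕ} (J : (Fin n → Fin m → ℝ) → Fin m → ℝ) : Prop :=
  ∀ u u' : Fin n → Fin m → ℝ, IsProfileU u → IsProfileU u' →
    (∀ i (j j' : Fin m), u i j < u i j' ↔ u' i j < u' i j') → J u = J u'

/-- Unilateral mechanism (on tie-free profiles): depends only on one voter. -/
def Unilateral {n m : ℕ} (J : (Fin n → Fin m → ℝ) → Fin m → ℝ) : Prop :=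
  ∃ i : Fin n, ∀ u u' : Fin n → Fin m → ℝ, IsProfileU u → IsProfileU u' →
    u i = u' i → J u = J u'

/-- Duple mechanism (on tie-free profiles): supported on two fixed candidates. -/
def Duple {n m : ℕ} (J : (Fin n → Fin m → ℝ) → Fin m → ℝ) : Prop :=
  ∃ j₀ j₁ : Fin m, j₀ ≠ j₁ ∧ ∀ u, IsProfileU u → ∀ j, j ≠ j₀ → j ≠ j₁ → J u j = 0

/-- Neutral mechanism (on tie-free profiles). -/
def Neutral {n m : ℕ} (J : (Fin n → Fin m → ℝ) → Fin m → ℝ) : Prop :=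
  ∀ τ : Equiv.Perm (Fin m), ∀ u : Fin n → Fin m → ℝ, IsProfileU u →
    ∀ j, J (fun i => u i ∘ τ) j = J u (τ j)

/-- Anonymous mechanism (on tie-free profiles). -/
def AnonymousMech {n m : ℕ} (J : (Fin n → Fin m → ℝ) → Fin m → ℝ) : Prop :=
  ∀ σ : Equiv.Perm (Fin n), ∀ u : Fin n → Fin m → ℝ, IsProfileU u →
    J (fun i => u (σ i)) = J u

/-- `ratio_U(J)`: infimum of the welfare ratio over tie-free profiles. -/
noncomputable def ratioU {n m : ℕ} (hm : 0 < m)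
    (J : (Fin n → Fin m → ℝ) → Fin m → ℝ) : ℝ :=
  sInf {r | ∃ u, IsProfileU u ∧ r = expWel J u / Wel (RV hm u) u}

/-- `R_k`: tie-free normalized preferences taking values in `{0,1/k,…,1}`. -/
def Rk {m : ℕ} (k : ℕ) (u : Fin m → ℝ) : Prop :=
  IsPrefU u ∧ ∀ j, ∃ t : ℕ, t ≤ k ∧ u j = (t : ℝ) / k

/-- `a(u)`: the number of `t ∈ {0,…,k-1}` such that exactly one of `t/k` and
`(t+1)/k` lies in the image of `u`. -/
noncomputable def aOf {m : ℕ} (k : ℕ) (u : Fin m → ℝ) : ℕ :=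
  ((Finset.range k).filter fun t : ℕ =>
    ((∃ j : Fin m, u j = (t : ℝ) / k) ∧ ¬ (∃ j : Fin m, u j = ((t : ℝ) + 1) / k)) ∨
    ((∃ j : Fin m, u j = ((t : ℝ) + 1) / k) ∧ ¬ (∃ j : Fin m, u j = (t : ℝ) / k))).card

/-- `C_k = {u ∈ R_k : a(u) = 2}`. -/
def Ck {m : ℕ} (k : ℕ) (u : Fin m → ℝ) : Prop :=
  Rk k u ∧ aOf k u = 2

/-- `count(u)`: the number of candidates with `u`-value above `1/2`. -/
noncomputable def countOf {m : ℕ} (u : Fin m → ℝ) : ℕ :=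
  (Finset.univ.filter fun j => (1 : ℝ)/2 < u j).card

/-- `rank(u,j) = #{j' : u(j') ≥ u(j)}`. -/
noncomputable def rankOf {m : ℕ} (u : Fin m → ℝ) (j : Fin m) : ℕ :=
  (Finset.univ.filter fun j' => u j ≤ u j').card

/-- `D_k = D_k^{(a)} ∪ D_k^{(b)} ∪ D_k^{(c)}` (`⟨0,hm⟩` is the first candidate). -/
def Dk {m : ℕ} (hm : 0 < m) (k : ℕ) (u : Fin m → ℝ) : Prop :=
  Ck k u ∧
    ((countOf u ≤ 2 ∧ (1 : ℝ)/2 < u ⟨0, hm⟩) ∨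
     (countOf u = 1 ∧ mroot3 m < rankOf u ⟨0, hm⟩) ∨
     (countOf u = mroot3 m + 1 ∧ rankOf u ⟨0, hm⟩ = mroot3 m + 1))

/-- `g(u) = E[Wel(J*(u),u)] / Wel(1,u)` where `1` is the first candidate. -/
noncomputable def gfun {n m : ℕ} (hm : 0 < m) (u : Fin n → Fin m → ℝ) : ℝ :=
  expWel Jstar u / Wel ⟨0, hm⟩ u

/-- The minimum (as an infimum) of `f` over profiles all of whose preference
functions satisfy `P`. -/
noncomputable def minOver {n m : ℕ} (P : (Fin m → ℝ) → Prop)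
    (f : (Fin n → Fin m → ℝ) → ℝ) : ℝ :=
  sInf {r | ∃ u : Fin n → Fin m → ℝ, (∀ i, P (u i)) ∧ r = f u}

/-!
Averaging over relabellings of voters and candidates makes `J` anonymous and neutral, without
decreasing its worst case. Truthfulness for preferences close to `1` on the top `k` candidates and
close to `0` elsewhere says that no misreport makes a winner among the top `k` more likely. Hence,
if a voter exchanges the adjacent candidates `x` above `z`, the probability that moves from `x` to
`z` depends only on the position of `x` and on the number of other voters who prefer `z` to `x`.
Moving `z` up past two candidates, which may stand in either order, shows that this amount splits as
`α p + β s`, so that `J` is a mixture of a point voting scheme and a supporting size scheme. The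
unanimous profile bounds both parts: `z` wins with probability at most `2 / m` plus the average over
the voters of the reciprocal of the rank of `z`.

With `k` about `(min m n) ^ (1/3)`, let `n / k` voters approve a candidate `z`, each ranking it
right behind `k` other approved candidates, and let every other voter approve one candidate and rank
`z` last. Then `z` has welfare about `n / k` but wins with probability `O(1 / k ^ 2)`. Since the
approvals other than those of `z` are spread evenly, all other candidates have welfare
`O(n / k ^ 3)`.
-/

section Development

open scoped BigOperators
open Equiv Filter Topology

variable {n m : ℕ}

/-! ### Rankings and scores -/

lemma exists_perm_lt_of_lt {α : Type*} [LinearOrder α] (l : Fin m → α) :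
    ∃ ρ : Perm (Fin m), ∀ a b, l a < l b → ρ a < ρ b := by
  refine ⟨(Tuple.sort l).symm, fun a b hab => ?_⟩
  contrapose! hab
  simpa using Tuple.monotone_sort l hab

lemma exists_perm_lt_iff_lt {α : Type*} [LinearOrder α] {l : Fin m → α}
    (hl : Function.Injective l) : ∃ ρ : Perm (Fin m), ∀ a b, ρ a < ρ b ↔ l a < l b := by
  obtain ⟨ρ, hρ⟩ := exists_perm_lt_of_lt l
  refine ⟨ρ, fun a b => ⟨fun hab => ?_, hρ a b⟩⟩
  refine (not_lt.1 fun hba => (hρ b a hba).not_gt hab).lt_of_ne fun h => ?_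
  exact hab.ne (congrArg ρ (hl h))

lemma exists_perm_moveToExtreme (r : Perm (Fin m)) {x z : Fin m} (hxz : x ≠ z) :
    ∃ ρ : Perm (Fin m), (∀ w, ρ w < ρ z ↔ r w < r z) ∧
      ∀ w, ρ w < ρ x ↔ r z < r x ∧ w ≠ x := by
  let l : Fin m → ℕ := fun w => if w = x then (if r z < r x then m + 1 else 0) else r w + 1
  have hl : Function.Injective l := by
    intro a b hab
    have ha := (r a).2
    have hb := (r b).2
    have hr : (r a : ℕ) = r b → a = b := fun h => r.injective (Fin.ext h)
    grind
  obtain ⟨ρ, hρ⟩ := exists_perm_lt_iff_lt hl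
  refine ⟨ρ, fun w => (hρ w z).trans ?_, fun w => (hρ w x).trans ?_⟩
  · have hne : r x ≠ r z := r.injective.ne hxz
    have := (r z).2
    grind
  · have := (r w).2
    grind

lemma card_filter_perm_lt (ρ : Perm (Fin m)) (z : Fin m) : #{w | ρ w < ρ z} = (ρ z : ℕ) := by
  rw [← Fin.card_Iio (ρ z)]
  exact card_equiv ρ (by simp)

/-- The set of the `k` candidates ranked highest by `r`, where `r j` is the position of
candidate `j`, counted from `0`. -/
def topSet (r : Perm (Fin m)) (k : ℕ) : Finset (Fin m) := {j | (r j : ℕ) < k}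

@[simp]
lemma mem_topSet {r : Perm (Fin m)} {k : ℕ} {j : Fin m} : j ∈ topSet r k ↔ (r j : ℕ) < k := by
  simp [topSet]

lemma sum_topSet_succ (r : Perm (Fin m)) (f : Fin m → ℝ) (z : Fin m) :
    ∑ j ∈ topSet r (r z + 1), f j = f z + ∑ j ∈ topSet r (r z), f j := by
  have h : topSet r (r z + 1) = cons z (topSet r (r z)) (by simp) := by
    ext j
    simp only [mem_topSet, mem_cons, Nat.lt_succ_iff_lt_or_eq, Fin.val_inj, r.apply_eq_iff_eq]
    exact or_comm
  rw [h, sum_cons]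

/-- The scores giving the `p`-th position `1 - p / (m - 1)`, used to turn rankings into
preference functions. -/
noncomputable def bordaScore (p : Fin m) : ℝ := 1 - p / (m - 1)

/-- The scores `1` for the first `k` positions and `0` for the others, perturbed by `ε` times the
Borda scores to break ties. -/
noncomputable def topScore (k : ℕ) (ε : ℝ) (p : Fin m) : ℝ :=
  (1 - ε) * (if (p : ℕ) < k then 1 else 0) + ε * bordaScore p

lemma bordaScore_mem_Icc (p : Fin m) : bordaScore p ∈ Set.Icc 0 1 := by
  have hp : (p : ℝ) + 1 ≤ m := mod_cast p.2
  have h0 : (0 : ℝ) ≤ p := p.val.cast_nonneg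
  exact ⟨sub_nonneg.2 (div_le_one_of_le₀ (by linarith) (by linarith)),
    sub_le_self _ (div_nonneg h0 (by linarith))⟩

lemma bordaScore_strictAnti : StrictAnti (bordaScore (m := m)) := by
  intro p q hpq
  have hpq' : (p : ℝ) < q := mod_cast hpq
  have hq : (q : ℝ) + 1 ≤ m := mod_cast q.2
  exact sub_lt_sub_left (div_lt_div_of_pos_right hpq' (by linarith)) 1

lemma topScore_strictAnti {k : ℕ} {ε : ℝ} (h0 : 0 < ε) (h1 : ε ≤ 1) :
    StrictAnti (topScore (m := m) k ε) := by
  intro p q hpq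
  refine add_lt_add_of_le_of_lt (mul_le_mul_of_nonneg_left ?_ (sub_nonneg.2 h1))
    (mul_lt_mul_of_pos_left (bordaScore_strictAnti hpq) h0)
  split_ifs <;> grind

lemma le_topScore {k : ℕ} {ε : ℝ} (h0 : 0 ≤ ε) (p : Fin m) :
    (1 - ε) * (if (p : ℕ) < k then 1 else 0) ≤ topScore k ε p :=
  le_add_of_nonneg_right (mul_nonneg h0 (bordaScore_mem_Icc p).1)

lemma topScore_le {k : ℕ} {ε : ℝ} (h0 : 0 ≤ ε) (p : Fin m) :
    topScore k ε p ≤ (if (p : ℕ) < k then 1 else 0) + ε := by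
  have := mul_le_of_le_one_right h0 (bordaScore_mem_Icc p).2
  unfold topScore
  split_ifs <;> linarith

lemma isPrefU_topScore {k : ℕ} (hk : 0 < k) (hkm : k < m) {ε : ℝ} (h0 : 0 < ε) (h1 : ε ≤ 1) :
    IsPrefU (topScore (m := m) k ε) := by
  have hanti := topScore_strictAnti (m := m) (k := k) h0 h1
  have hm : (m : ℝ) - 1 ≠ 0 := sub_ne_zero.2 (mod_cast (show m ≠ 1 by omega))
  have hfirst : topScore k ε (⟨0, by omega⟩ : Fin m) = 1 := by simp [topScore, bordaScore, hk]
  have hlast : topScore k ε (⟨m - 1, by omega⟩ : Fin m) = 0 := by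
    have : ¬ m - 1 < k := by omega
    simp [topScore, bordaScore, this, Nat.cast_sub (show 1 ≤ m by omega), hm]
  refine ⟨⟨fun p => ⟨?_, ?_⟩, ⟨_, hlast⟩, ⟨_, hfirst⟩⟩, hanti.injective⟩
  · rw [← hlast]
    exact hanti.antitone (Fin.mk_le_mk.2 (by omega) : p ≤ ⟨m - 1, _⟩)
  · rw [← hfirst]
    exact hanti.antitone (Fin.mk_le_mk.2 (by omega))

lemma bordaScore_eq_topScore (k : ℕ) : bordaScore (m := m) = topScore k 1 := by
  ext p
  simp [topScore]

lemma isPrefU_bordaScore (hm : 1 < m) : IsPrefU (bordaScore (m := m)) := by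
  rw [bordaScore_eq_topScore 1]
  exact isPrefU_topScore one_pos hm one_pos le_rfl

lemma IsPrefU.comp_perm {u : Fin m → ℝ} (hu : IsPrefU u) (τ : Perm (Fin m)) : IsPrefU (u ∘ τ) := by
  obtain ⟨⟨hmem, ⟨a, ha⟩, ⟨b, hb⟩⟩, hinj⟩ := hu
  exact ⟨⟨fun j => hmem (τ j), ⟨τ.symm a, by simpa⟩, ⟨τ.symm b, by simpa⟩⟩,
    hinj.comp τ.injective⟩

/-- The distribution with which an ordinal mechanism answers a profile of rankings. -/
noncomputable def rankOutcome (J : (Fin n → Fin m → ℝ) → Fin m → ℝ) (r : Fin n → Perm (Fin m)) :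
    Fin m → ℝ :=
  J fun i => bordaScore ∘ r i

lemma OrdinalMech.eq_rankOutcome {J : (Fin n → Fin m → ℝ) → Fin m → ℝ} (hO : OrdinalMech J)
    (hm : 1 < m) (r : Fin n → Perm (Fin m)) {f : Fin n → Fin m → ℝ} (hf : ∀ i, StrictAnti (f i))
    (hfU : IsProfileU f) : J (fun i => f i ∘ r i) = rankOutcome J r :=
  hO _ _ (fun i => (hfU i).comp_perm _) (fun _ => (isPrefU_bordaScore hm).comp_perm _)
    fun i _ _ => ((hf i).lt_iff_gt).trans bordaScore_strictAnti.lt_iff_gt.symm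

lemma sum_mul_topScore (P : Fin m → ℝ) (r : Perm (Fin m)) (k : ℕ) (ε : ℝ) :
    ∑ j, P j * topScore k ε (r j) =
      (1 - ε) * ∑ j ∈ topSet r k, P j + ε * ∑ j, P j * bordaScore (r j) := by
  simp only [topSet, sum_filter, mul_sum, ← sum_add_distrib]
  refine sum_congr rfl fun j _ => ?_
  unfold topScore
  split_ifs <;> ring

lemma Truthful.sum_mul_topScore_update_le {J : (Fin n → Fin m → ℝ) → Fin m → ℝ}
    (hT : Truthful J) (hO : OrdinalMech J) (r : Fin n → Perm (Fin m)) (i : Fin n)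
    (ρ : Perm (Fin m)) {k : ℕ} (hk : 0 < k) (hkm : k < m) {ε : ℝ} (h0 : 0 < ε) (h1 : ε ≤ 1) :
    ∑ j, rankOutcome J (Function.update r i ρ) j * topScore k ε (r i j) ≤
      ∑ j, rankOutcome J r j * topScore k ε (r i j) := by
  have hm : 1 < m := by omega
  have hborda := isPrefU_bordaScore hm
  let f : Fin n → Fin m → ℝ := Function.update (fun _ => bordaScore) i (topScore k ε)
  have hfU : IsProfileU f := (Function.forall_update_iff _ fun _ => IsPrefU).2
    ⟨isPrefU_topScore hk hkm h0 h1, fun _ _ => hborda⟩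
  have hf : ∀ i', StrictAnti (f i') := (Function.forall_update_iff _ fun _ => StrictAnti).2
    ⟨topScore_strictAnti h0 h1, fun _ _ => bordaScore_strictAnti⟩
  have hreport : Function.update (fun i' => f i' ∘ r i') i (bordaScore ∘ ρ) =
      fun i' => bordaScore ∘ Function.update r i ρ i' := by
    ext i' : 1
    by_cases h : i' = i
    · subst h; simp
    · simp [f, h]
  have htruth := hT _ (fun i' => (hfU i').comp_perm (r i')) i _ (hborda.comp_perm ρ)
  rw [hreport, hO.eq_rankOutcome hm r hf hfU] at htruth
  simpa [f, rankOutcome] using htruth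

lemma Truthful.sum_topSet_update_le {J : (Fin n → Fin m → ℝ) → Fin m → ℝ} (hT : Truthful J)
    (hO : OrdinalMech J) (r : Fin n → Perm (Fin m)) (i : Fin n) (ρ : Perm (Fin m)) {k : ℕ}
    (hk : 0 < k) (hkm : k < m) :
    ∑ j ∈ topSet (r i) k, rankOutcome J (Function.update r i ρ) j ≤
      ∑ j ∈ topSet (r i) k, rankOutcome J r j := by
  have htendsto (P : Fin m → ℝ) : Tendsto (fun ε => ∑ j, P j * topScore k ε (r i j)) (𝓝[>] 0)
      (𝓝 (∑ j ∈ topSet (r i) k, P j)) := by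
    simp only [sum_mul_topScore]
    refine tendsto_nhdsWithin_of_tendsto_nhds (Continuous.tendsto' (by fun_prop) _ _ ?_)
    ring
  refine le_of_tendsto_of_tendsto (htendsto _) (htendsto _) ?_
  filter_upwards [Ioo_mem_nhdsGT one_pos] with ε hε
  exact hT.sum_mul_topScore_update_le hO r i ρ hk hkm hε.1 hε.2.le

/-! ### Symmetrization -/

/-- The profile obtained from `u` by permuting the voters by `p.1` and the candidates by `p.2`. -/
def relabel (p : Perm (Fin n) × Perm (Fin m)) (u : Fin n → Fin m → ℝ) : Fin n → Fin m → ℝ :=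
  fun i => u (p.1 i) ∘ p.2

/-- The mechanism running `J` on a uniformly random relabelling of the voters and candidates,
and undoing the relabelling of the winner. -/
noncomputable def symmetrize (J : (Fin n → Fin m → ℝ) → Fin m → ℝ) :
    (Fin n → Fin m → ℝ) → Fin m → ℝ :=
  fun u j => 𝔼 p : Perm (Fin n) × Perm (Fin m), J (relabel p u) (p.2.symm j)

section Symmetrize

variable {J : (Fin n → Fin m → ℝ) → Fin m → ℝ} {u : Fin n → Fin m → ℝ}

lemma IsProfileU.relabel (hu : IsProfileU u) (p : Perm (Fin n) × Perm (Fin m)) :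
    IsProfileU (relabel p u) :=
  fun i => (hu (p.1 i)).comp_perm p.2

lemma relabel_update (p : Perm (Fin n) × Perm (Fin m)) (i : Fin n) (v : Fin m → ℝ) :
    relabel p (Function.update u i v) =
      Function.update (relabel p u) (p.1.symm i) (v ∘ p.2) := by
  ext i' : 1
  by_cases h : p.1 i' = i
  · simp [relabel, ← h]
  · have h' : i' ≠ p.1.symm i := fun hi => h (by simp [hi])
    simp [relabel, h, h']

lemma wel_relabel (p : Perm (Fin n) × Perm (Fin m)) (j : Fin m) :
    Wel j (relabel p u) = Wel (p.2 j) u :=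
  Equiv.sum_comp p.1 fun i => u i (p.2 j)

lemma sum_symmetrize_mul (w : Fin m → ℝ) :
    ∑ j, symmetrize J u j * w j =
      𝔼 p : Perm (Fin n) × Perm (Fin m), ∑ j, J (relabel p u) j * w (p.2 j) := by
  simp only [symmetrize, expect_mul, ← expect_sum_comm]
  refine expect_congr rfl fun p _ => ?_
  rw [← Equiv.sum_comp p.2]
  simp

lemma MechU.symmetrize (hJ : MechU J) : MechU (symmetrize J) := by
  refine fun u hu => ⟨fun j => expect_nonneg fun p _ => (hJ _ (hu.relabel p)).1 _, ?_⟩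
  have h := sum_symmetrize_mul (J := J) (u := u) 1
  simp only [Pi.one_apply, mul_one] at h
  simp only [h, (hJ _ (hu.relabel _)).2, Fintype.expect_const]

lemma OrdinalMech.symmetrize (hO : OrdinalMech J) : OrdinalMech (symmetrize J) := by
  intro u u' hu hu' h
  ext j
  refine expect_congr rfl fun p _ => congrFun (hO _ _ (hu.relabel p) (hu'.relabel p) ?_) _
  exact fun i j j' => h (p.1 i) (p.2 j) (p.2 j')

lemma Truthful.symmetrize (hT : Truthful J) : Truthful (symmetrize J) := by
  intro u hu i v hv
  rw [sum_symmetrize_mul, sum_symmetrize_mul]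
  refine expect_le_expect fun p _ => ?_
  rw [relabel_update]
  simpa [relabel] using hT _ (hu.relabel p) (p.1.symm i) _ (hv.comp_perm p.2)

lemma neutral_symmetrize (J : (Fin n → Fin m → ℝ) → Fin m → ℝ) : Neutral (symmetrize J) :=
  fun τ _ _ j => Fintype.expect_equiv ((Equiv.refl _).prodCongr (Equiv.mulLeft τ)) _ _ fun p =>
    congrArg (J _ <| p.2.symm ·) (τ.symm_apply_apply j).symm

lemma anonymousMech_symmetrize (J : (Fin n → Fin m → ℝ) → Fin m → ℝ) :
    AnonymousMech (symmetrize J) := by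
  intro σ u _
  ext j
  exact Fintype.expect_equiv ((Equiv.mulLeft σ).prodCongr (Equiv.refl _)) _ _ fun _ => rfl

lemma exists_expWel_relabel_le_expWel_symmetrize (J : (Fin n → Fin m → ℝ) → Fin m → ℝ)
    (u : Fin n → Fin m → ℝ) :
    ∃ p : Perm (Fin n) × Perm (Fin m), expWel J (relabel p u) ≤ expWel (symmetrize J) u := by
  obtain ⟨p, -, hp⟩ := exists_le_of_expect_le univ_nonempty
    (sum_symmetrize_mul (J := J) (u := u) fun j => Wel j u).ge
  exact ⟨p, by simpa only [expWel, wel_relabel] using hp⟩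

end Symmetrize

lemma wel_le_wel_RV (hm : 0 < m) (j : Fin m) (u : Fin n → Fin m → ℝ) :
    Wel j u ≤ Wel (RV hm u) u := by
  have h : RV hm u ∈ ({k | ∀ j', Wel j' u ≤ Wel k u} : Finset (Fin m)) := min'_mem _ _
  simpa using (mem_filter.1 h).2 j

/-- The properties of the answer to a profile of rankings that an anonymous, neutral, ordinal and
truthful mechanism has. Truthfulness appears as stochastic dominance: no misreport increases the
probability that the winner is among the favourite `k` candidates. -/
structure IsSymmRankMech (Q : (Fin n → Perm (Fin m)) → Fin m → ℝ) : Prop where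
  isDist (r : Fin n → Perm (Fin m)) : IsDist (Q r)
  sum_topSet_update_le (r : Fin n → Perm (Fin m)) (i : Fin n) (ρ : Perm (Fin m)) (k : ℕ) :
    ∑ j ∈ topSet (r i) k, Q (Function.update r i ρ) j ≤ ∑ j ∈ topSet (r i) k, Q r j
  neutral (τ : Perm (Fin m)) (r : Fin n → Perm (Fin m)) (j : Fin m) :
    Q (fun i => r i * τ) j = Q r (τ j)
  anonymous (σ : Perm (Fin n)) (r : Fin n → Perm (Fin m)) : Q (fun i => r (σ i)) = Q r

lemma isSymmRankMech_rankOutcome {J : (Fin n → Fin m → ℝ) → Fin m → ℝ} (hm : 1 < m)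
    (hJ : MechU J) (hO : OrdinalMech J) (hT : Truthful J) (hN : Neutral J)
    (hA : AnonymousMech J) : IsSymmRankMech (rankOutcome J) := by
  have hborda (r : Fin n → Perm (Fin m)) : IsProfileU fun i => bordaScore ∘ r i :=
    fun i => (isPrefU_bordaScore hm).comp_perm (r i)
  refine ⟨fun r => hJ _ (hborda r), fun r i ρ k => ?_, fun τ r j => hN τ _ (hborda r) j,
    fun σ r => hA σ _ (hborda r)⟩
  obtain rfl | hk := k.eq_zero_or_pos
  · simp [topSet]
  obtain hkm | hmk := lt_or_ge k m
  · exact hT.sum_topSet_update_le hO r i ρ hk hkm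
  · have htop : topSet (r i) k = univ := by
      ext j
      simpa using (r i j).2.trans_le hmk
    rw [htop]
    exact ((hJ _ (hborda _)).2.trans (hJ _ (hborda r)).2.symm).le

lemma exists_perm_apply_eq_and_mem_iff {α : Type*} [Finite α] {S T : Finset α}
    (hST : #S = #T) {i j : α} (hi : i ∉ S) (hj : j ∉ T) :
    ∃ σ : Perm α, σ i = j ∧ ∀ a, σ a ∈ T ↔ a ∈ S := by
  classical
  let e : Perm α := (S.equivOfCardEq hST).extendSubtype
  have he (a : α) : e a ∈ T ↔ a ∈ S :=
    ⟨fun h => by_contra fun ha => extendSubtype_not_mem _ a ha h, extendSubtype_mem _ a⟩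
  refine ⟨swap (e i) j * e, by simp, fun a => ?_⟩
  have hei : e i ∉ T := by rwa [he]
  rw [Perm.mul_apply, ← he a]
  by_cases h1 : e a = e i
  · simp [h1, hei, hj]
  by_cases h2 : e a = j
  · simp [h2, hei, hj]
  · rw [swap_apply_of_ne_of_ne h1 h2]

/-! ### Gains -/

/-- The profile in which voter `i` exchanges the candidates `x` and `z` in its ranking. -/
def exchange (r : Fin n → Perm (Fin m)) (i : Fin n) (x z : Fin m) : Fin n → Perm (Fin m) :=
  Function.update r i (r i * swap x z)

@[simp]
lemma exchange_apply_self (r : Fin n → Perm (Fin m)) (i : Fin n) (x z w : Fin m) :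
    exchange r i x z i w = r i (swap x z w) := by
  simp [exchange]

lemma exchange_apply_of_ne {r : Fin n → Perm (Fin m)} {i j : Fin n} (h : j ≠ i) (x z : Fin m) :
    exchange r i x z j = r j :=
  Function.update_of_ne h _ _

lemma exchange_lt_exchange_congr {r r' : Fin n → Perm (Fin m)} {i : Fin n} {x y z : Fin m}
    (hi : r i = r' i) (h : ∀ j w, r j w < r j y ↔ r' j w < r' j y) (j : Fin n) (w : Fin m) :
    exchange r i x z j w < exchange r i x z j y ↔
      exchange r' i x z j w < exchange r' i x z j y := by
  by_cases hj : j = i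
  · subst hj
    simp [exchange, hi]
  · simpa [exchange, hj] using h j w

/-- The voters preferring `z` to `x`. -/
def supporters (r : Fin n → Perm (Fin m)) (z x : Fin m) : Finset (Fin n) := {i | r i z < r i x}

@[simp]
lemma mem_supporters {r : Fin n → Perm (Fin m)} {z x : Fin m} {i : Fin n} :
    i ∈ supporters r z x ↔ r i z < r i x := by
  simp [supporters]

lemma supporters_exchange {r : Fin n → Perm (Fin m)} {i : Fin n} {a b x z : Fin m}
    (h : r i (swap a b z) < r i (swap a b x) ↔ r i z < r i x) :
    supporters (exchange r i a b) z x = supporters r z x := by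
  ext j
  by_cases hj : j = i
  · subst hj
    simpa [exchange] using h
  · simp [exchange, hj]

lemma exists_card_supporters_eq {y z : Fin m} (hyz : y < z) {s : ℕ} (hs : s < n) :
    ∃ (r : Fin n → Perm (Fin m)) (i : Fin n),
      r i = 1 ∧ #(supporters r z y) = s ∧ ∀ x < y, supporters r z x = ∅ := by
  let r : Fin n → Perm (Fin m) := fun j => if (j : ℕ) < s then swap y z else 1
  refine ⟨r, ⟨s, hs⟩, by simp [r], ?_, fun x hx => ?_⟩
  · have : supporters r z y = Iio ⟨s, hs⟩ := by
      ext j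
      have hmem : j < ⟨s, hs⟩ ↔ (j : ℕ) < s := Iff.rfl
      by_cases hj : (j : ℕ) < s
      · simp [r, hj, hmem, hyz]
      · simp [r, hj, hmem, hyz.le]
    rw [this, Fin.card_Iio]
  · ext j
    have hxz := hx.trans hyz
    by_cases hj : (j : ℕ) < s
    · simp [r, hj, swap_apply_of_ne_of_ne hx.ne hxz.ne, hx.le]
    · simp [r, hj, hxz.le]

/-- The increase of the probability of `z` when `z` overtakes `x` in the ranking of voter `i`. -/
def gain (Q : (Fin n → Perm (Fin m)) → Fin m → ℝ) (r : Fin n → Perm (Fin m)) (i : Fin n)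
    (x z : Fin m) : ℝ :=
  Q (exchange r i x z) z - Q r z

/-- The gains of `Q` are given by `d`: overtaking the candidate at position `p`, when `s` other
voters already prefer the overtaking candidate to it, is worth `d p s`. -/
def HasGains (Q : (Fin n → Perm (Fin m)) → Fin m → ℝ) (d : ℕ → ℕ → ℝ) : Prop :=
  ∀ (r : Fin n → Perm (Fin m)) (i : Fin n) (x z : Fin m), (r i z : ℕ) = r i x + 1 →
    gain Q r i x z = d (r i x) #(supporters r z x)

namespace IsSymmRankMech

variable {Q : (Fin n → Perm (Fin m)) → Fin m → ℝ}

lemma sum_topSet_update_eq (hQ : IsSymmRankMech Q) (r : Fin n → Perm (Fin m)) (i : Fin n)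
    (ρ : Perm (Fin m)) (k : ℕ) (h : topSet ρ k = topSet (r i) k) :
    ∑ j ∈ topSet (r i) k, Q (Function.update r i ρ) j = ∑ j ∈ topSet (r i) k, Q r j := by
  refine (hQ.sum_topSet_update_le r i ρ k).antisymm ?_
  simpa [h] using hQ.sum_topSet_update_le (Function.update r i ρ) i (r i) k

lemma update_apply_eq (hQ : IsSymmRankMech Q) (r : Fin n → Perm (Fin m)) (i : Fin n)
    (ρ : Perm (Fin m)) {z : Fin m} (h : ∀ w, ρ w < ρ z ↔ r i w < r i z) :
    Q (Function.update r i ρ) z = Q r z := by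
  have hpos : ρ z = r i z := by
    rw [Fin.ext_iff, ← card_filter_perm_lt, ← card_filter_perm_lt]
    simp only [h]
  have htop : topSet ρ (r i z) = topSet (r i) (r i z) := by
    ext w
    simpa [hpos] using h w
  have htop_succ : topSet ρ (r i z + 1) = topSet (r i) (r i z + 1) := by
    ext w
    have hw := h w
    by_cases hwz : w = z
    · simp [hwz, hpos]
    · have h1 := ρ.injective.ne hwz
      have h2 := (r i).injective.ne hwz
      grind [mem_topSet]
  have hsum := hQ.sum_topSet_update_eq r i ρ _ htop
  have hsum_succ := hQ.sum_topSet_update_eq r i ρ _ htop_succ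
  rw [sum_topSet_succ, sum_topSet_succ, hsum] at hsum_succ
  exact add_right_cancel hsum_succ

lemma apply_congr (hQ : IsSymmRankMech Q) {r r' : Fin n → Perm (Fin m)} {z : Fin m}
    (h : ∀ i w, r i w < r i z ↔ r' i w < r' i z) : Q r z = Q r' z := by
  have hpiecewise (S : Finset (Fin n)) : Q (S.piecewise r' r) z = Q r z := by
    induction S using Finset.induction with
    | empty => rw [piecewise_empty]
    | insert i S hi ih =>
      rw [piecewise_insert, hQ.update_apply_eq _ i, ih]
      intro w
      rw [piecewise_eq_of_notMem _ _ _ hi, h]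
  rw [← hpiecewise univ, piecewise_univ]

section Exchange

variable {r : Fin n → Perm (Fin m)} {i : Fin n} {x z : Fin m}

lemma sum_topSet_exchange (hQ : IsSymmRankMech Q) (hxz : (r i z : ℕ) = r i x + 1) {k : ℕ}
    (hk : k ≠ r i z) :
    ∑ j ∈ topSet (r i) k, Q (exchange r i x z) j = ∑ j ∈ topSet (r i) k, Q r j := by
  refine hQ.sum_topSet_update_eq r i _ k ?_
  ext w
  simp only [mem_topSet, Perm.mul_apply]
  rw [swap_apply_def]
  split_ifs with hwx hwz
  · rw [hwx]; omega
  · rw [hwz]; omega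
  · rfl

lemma gain_eq_loss (hQ : IsSymmRankMech Q) (hxz : (r i z : ℕ) = r i x + 1) :
    gain Q r i x z = Q r x - Q (exchange r i x z) x := by
  have h0 := hQ.sum_topSet_exchange hxz (k := r i x) (by omega)
  have h2 := hQ.sum_topSet_exchange hxz (k := r i z + 1) (by omega)
  rw [sum_topSet_succ, sum_topSet_succ, hxz, sum_topSet_succ, sum_topSet_succ, h0] at h2
  unfold gain
  linarith

lemma gain_nonneg (hQ : IsSymmRankMech Q) (hxz : (r i z : ℕ) = r i x + 1) :
    0 ≤ gain Q r i x z := by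
  have h0 := hQ.sum_topSet_exchange hxz (k := r i x) (by omega)
  have h1 := hQ.sum_topSet_update_le r i (r i * swap x z) (r i x + 1)
  rw [sum_topSet_succ, sum_topSet_succ] at h1
  rw [hQ.gain_eq_loss hxz]
  unfold exchange at h0 ⊢
  linarith

end Exchange

section Gain

variable {r r' : Fin n → Perm (Fin m)} {i : Fin n} {x z : Fin m}

lemma gain_congr_of_gainer (hQ : IsSymmRankMech Q) (hi : r i = r' i)
    (h : ∀ j w, r j w < r j z ↔ r' j w < r' j z) : gain Q r i x z = gain Q r' i x z := by
  rw [gain, gain, hQ.apply_congr h, hQ.apply_congr (exchange_lt_exchange_congr hi h)]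

lemma gain_congr_of_loser (hQ : IsSymmRankMech Q) (hxz : (r i z : ℕ) = r i x + 1)
    (hi : r i = r' i) (h : ∀ j w, r j w < r j x ↔ r' j w < r' j x) :
    gain Q r i x z = gain Q r' i x z := by
  rw [hQ.gain_eq_loss hxz, hQ.gain_eq_loss (hi ▸ hxz), hQ.apply_congr h,
    hQ.apply_congr (exchange_lt_exchange_congr hi h)]

lemma gain_congr_of_supporters (hQ : IsSymmRankMech Q) (hxz : (r i z : ℕ) = r i x + 1)
    (hi : r i = r' i) (h : supporters r z x = supporters r' z x) :
    gain Q r i x z = gain Q r' i x z := by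
  have hne : x ≠ z := by rintro rfl; omega
  -- The first two `gain_congr` lemmas only see what lies above `z`, resp. above `x`. Putting `x` at
  -- an end of every other ranking keeps the former and makes the latter depend on supporters only.
  have hextreme (r : Fin n → Perm (Fin m)) : ∃ t : Fin n → Perm (Fin m), t i = r i ∧
      (∀ j w, t j w < t j z ↔ r j w < r j z) ∧
      ∀ j, j ≠ i → ∀ w, t j w < t j x ↔ j ∈ supporters r z x ∧ w ≠ x := by
    choose t htz htx using fun j => exists_perm_moveToExtreme (r j) hne
    refine ⟨Function.update t i (r i), by simp, fun j w => ?_, fun j hj w => ?_⟩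
    · by_cases hj : j = i
      · subst hj; simp
      · simpa [hj] using htz j w
    · simpa [hj] using htx j w
  obtain ⟨t, hti, htz, htx⟩ := hextreme r
  obtain ⟨t', hti', htz', htx'⟩ := hextreme r'
  have htt' : t i = t' i := by rw [hti, hi, hti']
  calc gain Q r i x z = gain Q t i x z := (hQ.gain_congr_of_gainer hti htz).symm
    _ = gain Q t' i x z := hQ.gain_congr_of_loser (by rwa [hti]) htt' fun j w => by
      by_cases hj : j = i
      · rw [hj, htt']
      · rw [htx j hj, htx' j hj, h]
    _ = gain Q r' i x z := hQ.gain_congr_of_gainer hti' htz'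

lemma gain_relabel (hQ : IsSymmRankMech Q) (σ : Perm (Fin n)) (τ : Perm (Fin m)) :
    gain Q (fun j => r (σ j) * τ) i x z = gain Q r (σ i) (τ x) (τ z) := by
  have hexchange : exchange (fun j => r (σ j) * τ) i x z =
      fun j => exchange r (σ i) (τ x) (τ z) (σ j) * τ := by
    ext j : 1
    by_cases hj : j = i
    · subst hj
      simp [exchange, mul_assoc, mul_swap_eq_swap_mul τ]
    · simp [exchange, hj]
  have happly (r : Fin n → Perm (Fin m)) : Q (fun j => r (σ j) * τ) z = Q r (τ z) := by
    rw [hQ.neutral τ fun j => r (σ j), hQ.anonymous]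
  rw [gain, gain, hexchange, happly, happly]

lemma gain_congr (hQ : IsSymmRankMech Q) {i' : Fin n} {x' z' : Fin m}
    (hxz : (r i z : ℕ) = r i x + 1) (hxz' : (r' i' z' : ℕ) = r' i' x' + 1)
    (hpos : r i x = r' i' x') (hcard : #(supporters r z x) = #(supporters r' z' x')) :
    gain Q r i x z = gain Q r' i' x' z' := by
  obtain ⟨σ, rfl, hσ⟩ := exists_perm_apply_eq_and_mem_iff hcard (i := i) (j := i')
    (by simp [Fin.le_def, hxz]) (by simp [Fin.le_def, hxz'])
  let τ : Perm (Fin m) := (r' (σ i))⁻¹ * r i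
  have hx : τ x = x' := by simp [τ, hpos]
  have hz : τ z = z' := by
    have : r i z = r' (σ i) z' := Fin.ext (by rw [hxz, hxz', hpos])
    simp [τ, this]
  have hsupp : supporters r z x = supporters (fun j => r' (σ j) * τ) z x := by
    ext j
    simpa [hx, hz] using (hσ j).symm
  rw [hQ.gain_congr_of_supporters hxz (by simp [τ]) hsupp, hQ.gain_relabel, hx, hz]

end Gain

lemma exists_hasGains (hQ : IsSymmRankMech Q) : ∃ d, HasGains Q d := by
  let Config := {c : (Fin n → Perm (Fin m)) × Fin n × Fin m × Fin m //
    (c.1 c.2.1 c.2.2.2 : ℕ) = c.1 c.2.1 c.2.2.1 + 1}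
  let gainOf : Config → ℝ := fun ⟨(r, i, x, z), _⟩ => gain Q r i x z
  let data : Config → ℕ × ℕ := fun ⟨(r, i, x, z), _⟩ => (r i x, #(supporters r z x))
  have hfactors : gainOf.FactorsThrough data := fun ⟨_, h⟩ ⟨_, h'⟩ hdata =>
    hQ.gain_congr h h' (Fin.ext (Prod.mk.inj hdata).1) (Prod.mk.inj hdata).2
  obtain ⟨d, hd⟩ := (Function.factorsThrough_iff gainOf).1 hfactors
  exact ⟨fun p s => d (p, s), fun r i x z h => congrFun hd ⟨(r, i, x, z), h⟩⟩

lemma gain_add_gain_comm (hQ : IsSymmRankMech Q) {r : Fin n → Perm (Fin m)} {i : Fin n}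
    {x y z : Fin m} (hxy : (r i y : ℕ) = r i x + 1) (hyz : (r i z : ℕ) = r i y + 1) :
    gain Q r i y z + gain Q (exchange r i y z) i x z =
      gain Q (exchange r i x y) i x z + gain Q (exchange (exchange r i x y) i x z) i y z := by
  have hxy' : x ≠ y := by rintro rfl; omega
  have hyz' : y ≠ z := by rintro rfl; omega
  have hxz' : x ≠ z := by rintro rfl; omega
  -- Both sides move `z` up past `x` and `y`; who is above `z` before and after is the same.
  have hstart : Q r z = Q (exchange r i x y) z := by
    refine hQ.apply_congr fun j w => ?_
    by_cases hj : j = i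
    · subst hj
      simp only [exchange, Function.update_self, Perm.mul_apply, swap_apply_def]
      grind
    · simp [exchange, hj]
  have hend : Q (exchange (exchange r i y z) i x z) z =
      Q (exchange (exchange (exchange r i x y) i x z) i y z) z := by
    refine hQ.apply_congr fun j w => ?_
    by_cases hj : j = i
    · subst hj
      simp only [exchange, Function.update_self, Perm.mul_apply, swap_apply_def]
      grind
    · simp [exchange, hj]
  unfold gain
  linarith

lemma add_eq_add_of_hasGains (hQ : IsSymmRankMech Q) {d : ℕ → ℕ → ℝ} (hd : HasGains Q d)
    {r : Fin n → Perm (Fin m)} {i : Fin n} {x y z : Fin m} (hxy : (r i y : ℕ) = r i x + 1)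
    (hyz : (r i z : ℕ) = r i y + 1) :
    d (r i y) #(supporters r z y) + d (r i x) #(supporters r z x) =
      d (r i y) #(supporters r z x) + d (r i x) #(supporters r z y) := by
  have hxy' : x ≠ y := by rintro rfl; omega
  have hyz' : y ≠ z := by rintro rfl; omega
  have hxz' : x ≠ z := by rintro rfl; omega
  have hcomm := hQ.gain_add_gain_comm hxy hyz
  have hsupp₁ : supporters (exchange r i y z) z x = supporters r z x :=
    supporters_exchange (by grind)
  have hsupp₂ : supporters (exchange r i x y) z x = supporters r z x :=
    supporters_exchange (by grind)
  have hsupp₃ : supporters (exchange (exchange r i x y) i x z) z y = supporters r z y := by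
    rw [supporters_exchange, supporters_exchange] <;>
      grind [exchange_apply_self]
  rw [hd _ _ _ _ hyz, hd, hd, hd, hsupp₁, hsupp₂, hsupp₃] at hcomm
  · simpa [swap_apply_of_ne_of_ne, hxy', hxy'.symm, hxz', hyz', add_comm] using hcomm
  all_goals grind [exchange_apply_self]

lemma sub_eq_sub_of_hasGains (hQ : IsSymmRankMech Q) {d : ℕ → ℕ → ℝ} (hd : HasGains Q d) {p s : ℕ}
    (hp : p + 1 < m) (hs : s < n) : d p s - d p 0 = d 0 s - d 0 0 := by
  induction p with
  | zero => rfl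
  | succ p ih =>
    let x : Fin m := ⟨p, by omega⟩
    let y : Fin m := ⟨p + 1, by omega⟩
    let z : Fin m := ⟨p + 2, hp⟩
    obtain ⟨r, i, hi, hs, hx⟩ := exists_card_supporters_eq (y := y) (z := z) (by simp [y, z]) hs
    have h := hQ.add_eq_add_of_hasGains hd (r := r) (i := i) (x := x) (y := y) (z := z)
      (by simp [hi, x, y]) (by simp [hi, y, z])
    rw [hs, hx x (by simp [x, y]), hi, card_empty] at h
    simp only [Perm.one_apply, x, y] at h
    linarith [ih (by omega)]

lemma nonneg_of_hasGains (hQ : IsSymmRankMech Q) {d : ℕ → ℕ → ℝ} (hd : HasGains Q d) {p s : ℕ}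
    (hp : p + 1 < m) (hs : s < n) : 0 ≤ d p s := by
  let y : Fin m := ⟨p, by omega⟩
  let z : Fin m := ⟨p + 1, hp⟩
  obtain ⟨r, i, hi, hs, -⟩ := exists_card_supporters_eq (y := y) (z := z) (by simp [y, z]) hs
  have hyz : (r i z : ℕ) = r i y + 1 := by simp [hi, y, z]
  simpa [hd _ _ _ _ hyz, hi, hs] using hQ.gain_nonneg hyz

lemma exists_hasGains_add (hQ : IsSymmRankMech Q) (hm : 1 < m) :
    ∃ α β : ℕ → ℝ, 0 ≤ α ∧ 0 ≤ β ∧ HasGains Q fun p s => α p + β s := by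
  obtain ⟨d, hd⟩ := hQ.exists_hasGains
  obtain ⟨b, hb, hb_min⟩ := exists_min_image (range (m - 1)) (d · 0) ⟨0, by simp; omega⟩
  simp only [mem_range] at hb hb_min
  -- The absolute values only matter at indices that no overtaking realizes.
  refine ⟨fun p => |d p 0 - d b 0|, fun s => |d b s|, fun _ => abs_nonneg _, fun _ => abs_nonneg _,
    fun r i x z hxz => ?_⟩
  have hp : (r i x : ℕ) + 1 < m := hxz ▸ (r i z).2
  have hs : #(supporters r z x) < n := by
    simpa using card_lt_univ_of_notMem (s := supporters r z x) (x := i) (by simp [Fin.le_def, hxz])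
  have h0 : 0 ≤ d (r i x) 0 - d b 0 := sub_nonneg.2 (hb_min _ (by omega))
  simp only [hd _ _ _ _ hxz, abs_of_nonneg h0,
    abs_of_nonneg (hQ.nonneg_of_hasGains hd (p := b) (by omega) hs)]
  linarith [hQ.sub_eq_sub_of_hasGains hd hp hs, hQ.sub_eq_sub_of_hasGains hd (p := b) (by omega) hs]

end IsSymmRankMech

/-! ### Point voting and supporting size schemes -/

/-- The score of `z` in the point voting scheme with increments `α`: a voter ranking `z` at
position `p` contributes `α p + ⋯ + α (m - 2)`. -/
noncomputable def pointScore (α : ℕ → ℝ) (r : Fin n → Perm (Fin m)) (z : Fin m) : ℝ :=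
  ∑ i, ∑ p ∈ Ico (r i z : ℕ) (m - 1), α p

/-- The score of `z` in the supporting size scheme with increments `β`: a candidate to which `s`
voters prefer `z` contributes `β 0 + ⋯ + β (s - 1)`. -/
noncomputable def supportScore (β : ℕ → ℝ) (r : Fin n → Perm (Fin m)) (z : Fin m) : ℝ :=
  ∑ x ∈ univ.erase z, ∑ s ∈ range #(supporters r z x), β s

section Exchange

variable {r : Fin n → Perm (Fin m)} {i : Fin n} {x z : Fin m}

lemma pointScore_exchange (α : ℕ → ℝ) (hxz : (r i z : ℕ) = r i x + 1) :
    pointScore α (exchange r i x z) z = pointScore α r z + α (r i x) := by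
  have hlt : (r i x : ℕ) < m - 1 := by have := (r i z).2; omega
  have hrest : ∀ j ∈ univ.erase i, ∑ p ∈ Ico (exchange r i x z j z : ℕ) (m - 1), α p =
      ∑ p ∈ Ico (r j z : ℕ) (m - 1), α p := fun j hj => by
    rw [exchange_apply_of_ne (ne_of_mem_erase hj)]
  rw [pointScore, pointScore, ← add_sum_erase _ _ (mem_univ i), sum_congr rfl hrest,
    ← add_sum_erase univ (fun j => ∑ p ∈ Ico (r j z : ℕ) (m - 1), α p) (mem_univ i),
    exchange_apply_self, swap_apply_right, sum_eq_sum_Ico_succ_bot hlt, hxz]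
  ring

lemma supportScore_exchange (β : ℕ → ℝ) (hxz : (r i z : ℕ) = r i x + 1) :
    supportScore β (exchange r i x z) z = supportScore β r z + β #(supporters r z x) := by
  have hne : x ≠ z := by rintro rfl; omega
  have hx : x ∈ univ.erase z := by simp [hne]
  have hi : i ∉ supporters r z x := by simp [Fin.le_def, hxz]
  have hsupp : supporters (exchange r i x z) z x = insert i (supporters r z x) := by
    ext j
    by_cases hj : j = i
    · subst hj; simp [Fin.lt_def, hxz]
    · simp [exchange_apply_of_ne hj, hj]
  have hrest : ∀ y ∈ (univ.erase z).erase x,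
      ∑ s ∈ range #(supporters (exchange r i x z) z y), β s =
        ∑ s ∈ range #(supporters r z y), β s := by
    intro y hy
    have hyx := (r i).injective.ne (ne_of_mem_erase hy)
    have hyz := (r i).injective.ne (ne_of_mem_erase (mem_of_mem_erase hy))
    rw [supporters_exchange (by grind)]
  rw [supportScore, supportScore, ← add_sum_erase _ _ hx, sum_congr rfl hrest,
    ← add_sum_erase _ (fun y => ∑ s ∈ range #(supporters r z y), β s) hx, hsupp,
    card_insert_of_notMem hi, sum_range_succ]
  ring

lemma exchange_exchange (r : Fin n → Perm (Fin m)) (i : Fin n) (x z : Fin m) :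
    exchange (exchange r i x z) i z x = r := by
  simp [exchange, mul_assoc, swap_comm z x]

end Exchange

namespace IsSymmRankMech

variable {Q : (Fin n → Perm (Fin m)) → Fin m → ℝ}

lemma apply_eq_of_forall_last (hQ : IsSymmRankMech Q) {l : Fin m} (hl : (l : ℕ) = m - 1)
    {r : Fin n → Perm (Fin m)} {z : Fin m} (h : ∀ i, r i z = l) : Q r z = Q 1 l := by
  have hlast (w : Fin m) : w < l ↔ w ≠ l :=
    ⟨ne_of_lt, fun hw => lt_of_le_of_ne (Fin.le_def.2 (by omega)) hw⟩
  calc Q r z = Q (fun _ => 1 * swap z l) z := hQ.apply_congr fun i w => by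
        rw [h, one_mul, swap_apply_left, hlast, hlast, ← h i, (r i).injective.ne_iff, h i,
          Ne, Ne, swap_apply_eq_iff, swap_apply_right]
    _ = Q 1 l := by rw [hQ.neutral (swap z l) fun _ => 1, swap_apply_left]; rfl

theorem apply_eq_pointScore_add_supportScore (hQ : IsSymmRankMech Q) {α β : ℕ → ℝ}
    (hd : HasGains Q fun p s => α p + β s) {l : Fin m} (hl : (l : ℕ) = m - 1)
    (r : Fin n → Perm (Fin m)) (z : Fin m) :
    Q r z = Q 1 l + pointScore α r z + supportScore β r z := by
  induction hN : ∑ i, (m - 1 - r i z : ℕ) using Nat.strong_induction_on generalizing r with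
  | _ N ih =>
  by_cases hlast : ∀ i, r i z = l
  · have hsupp (x : Fin m) : supporters r z x = ∅ := by
      ext j
      simp only [mem_supporters, hlast, Fin.lt_def]
      grind
    simp [pointScore, supportScore, hsupp, hlast, hl, hQ.apply_eq_of_forall_last hl hlast]
  obtain ⟨i, hi⟩ := not_forall.1 hlast
  have hpos : (r i z : ℕ) + 1 < m := by grind
  let x := (r i).symm ⟨r i z + 1, hpos⟩
  have hzx : (r i x : ℕ) = r i z + 1 := by simp [x]
  set r' := exchange r i z x with hr'
  have hxz' : (r' i z : ℕ) = r' i x + 1 := by simp [hr', hzx]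
  have hsmaller : ∑ i, (m - 1 - r' i z : ℕ) < N := by
    rw [← hN]
    refine sum_lt_sum (fun j _ => ?_) ⟨i, mem_univ i, by simp [hr', hzx]; omega⟩
    by_cases hj : j = i
    · subst hj; simp [hr', hzx]; omega
    · rw [hr', exchange_apply_of_ne hj]
  have hgain := hd r' i x z hxz'
  have hpoint := pointScore_exchange α hxz'
  have hsupport := supportScore_exchange β hxz'
  rw [hr', exchange_exchange, ← hr'] at hpoint hsupport
  rw [gain, hr', exchange_exchange, ← hr', ih _ hsmaller r' rfl] at hgain
  linarith

lemma apply_unanimous (hQ : IsSymmRankMech Q) {α β : ℕ → ℝ} (hd : HasGains Q fun p s => α p + β s)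
    {l : Fin m} (hl : (l : ℕ) = m - 1) (z : Fin m) :
    Q 1 z = Q 1 l + n * ∑ p ∈ Ico (z : ℕ) (m - 1), α p +
      (m - 1 - z : ℕ) * ∑ s ∈ range n, β s := by
  have hpoint : pointScore α (1 : Fin n → Perm (Fin m)) z =
      n * ∑ p ∈ Ico (z : ℕ) (m - 1), α p := by
    simp [pointScore]
  have hsupp (x : Fin m) : ∑ s ∈ range #(supporters (1 : Fin n → Perm (Fin m)) z x), β s =
      if z < x then ∑ s ∈ range n, β s else 0 := by
    split_ifs with h <;> simp [supporters, h]
  have hsupport : supportScore β (1 : Fin n → Perm (Fin m)) z =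
      (m - 1 - z : ℕ) * ∑ s ∈ range n, β s := by
    rw [supportScore, sum_congr rfl fun x _ => hsupp x, ← sum_filter, sum_const, nsmul_eq_mul,
      ← Fin.card_Ioi]
    congr 3
    ext x
    simpa using fun h => h.ne'
  rw [hQ.apply_eq_pointScore_add_supportScore hd hl, hpoint, hsupport]

lemma succ_mul_sum_Ico_le_one (hQ : IsSymmRankMech Q) {α β : ℕ → ℝ} (hα : 0 ≤ α) (hβ : 0 ≤ β)
    (hd : HasGains Q fun p s => α p + β s) (z : Fin m) :
    ((z : ℝ) + 1) * (n * ∑ p ∈ Ico (z : ℕ) (m - 1), α p) ≤ 1 := by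
  let l : Fin m := ⟨m - 1, by have := z.2; omega⟩
  have hB : 0 ≤ ∑ s ∈ range n, β s := sum_nonneg fun s _ => hβ s
  have hle : ∀ j ∈ Iic z, n * ∑ p ∈ Ico (z : ℕ) (m - 1), α p ≤ Q 1 j := fun j hj => by
    have hA : ∑ p ∈ Ico (z : ℕ) (m - 1), α p ≤ ∑ p ∈ Ico (j : ℕ) (m - 1), α p :=
      sum_le_sum_of_subset_of_nonneg (Ico_subset_Ico_left (Fin.le_def.1 (mem_Iic.1 hj)))
        fun p _ _ => hα p
    rw [hQ.apply_unanimous hd (l := l) rfl]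
    have hc := (hQ.isDist 1).1 l
    have := mul_le_mul_of_nonneg_left hA n.cast_nonneg
    have := mul_nonneg (m - 1 - j : ℕ).cast_nonneg hB
    linarith
  calc ((z : ℝ) + 1) * (n * ∑ p ∈ Ico (z : ℕ) (m - 1), α p)
      = #(Iic z) • (n * ∑ p ∈ Ico (z : ℕ) (m - 1), α p) := by simp
    _ ≤ ∑ j ∈ Iic z, Q 1 j := card_nsmul_le_sum _ _ _ hle
    _ ≤ ∑ j, Q 1 j := sum_le_univ_sum_of_nonneg (hQ.isDist 1).1
    _ = 1 := (hQ.isDist 1).2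

lemma apply_last_add_mul_sum_le (hQ : IsSymmRankMech Q) {α β : ℕ → ℝ} (hα : 0 ≤ α)
    (hd : HasGains Q fun p s => α p + β s) {l : Fin m} (hl : (l : ℕ) = m - 1) :
    Q 1 l + (m - 1 : ℕ) * ∑ s ∈ range n, β s ≤ 2 / m := by
  have hm : (0 : ℝ) < m := mod_cast l.pos
  set B := ∑ s ∈ range n, β s
  have hc := (hQ.isDist 1).1 l
  have hle (j : Fin m) : Q 1 l + (m - 1 : ℕ) * B ≤ Q 1 j + Q 1 j.rev := by
    have hA (j : Fin m) : Q 1 l + (m - 1 - j : ℕ) * B ≤ Q 1 j := by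
      rw [hQ.apply_unanimous hd hl j]
      have := mul_nonneg n.cast_nonneg (sum_nonneg fun p (_ : p ∈ Ico (j : ℕ) (m - 1)) => hα p)
      linarith
    have hrev : (m - 1 : ℕ) = (m - 1 - j : ℕ) + (m - 1 - j.rev : ℕ) := by
      rw [Fin.val_rev]; omega
    rw [hrev, Nat.cast_add]
    linarith [hA j, hA j.rev]
  rw [le_div_iff₀' hm]
  calc m * (Q 1 l + (m - 1 : ℕ) * B) = #(univ : Finset (Fin m)) • (Q 1 l + (m - 1 : ℕ) * B) := by
        rw [card_fin, nsmul_eq_mul]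
    _ ≤ ∑ j, (Q 1 j + Q 1 j.rev) := card_nsmul_le_sum _ _ _ fun j _ => hle j
    _ = 2 := by
      have hsum_rev : ∑ j : Fin m, Q 1 j.rev = ∑ j, Q 1 j := Equiv.sum_comp Fin.revPerm (Q 1)
      rw [sum_add_distrib, hsum_rev, (hQ.isDist 1).2, one_add_one_eq_two]

theorem apply_le_two_div_add (hQ : IsSymmRankMech Q) (hm : 1 < m) (r : Fin n → Perm (Fin m))
    (z : Fin m) : Q r z ≤ 2 / m + (∑ i, 1 / ((r i z : ℝ) + 1)) / n := by
  obtain ⟨α, β, hα, hβ, hd⟩ := hQ.exists_hasGains_add hm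
  let l : Fin m := ⟨m - 1, by omega⟩
  have hpoint : pointScore α r z ≤ (∑ i, 1 / ((r i z : ℝ) + 1)) / n := by
    rw [pointScore, sum_div]
    refine sum_le_sum fun i _ => ?_
    have hn : (0 : ℝ) < n := mod_cast i.pos
    rw [div_div, le_div_iff₀' (by positivity), mul_assoc]
    exact hQ.succ_mul_sum_Ico_le_one hα hβ hd (r i z)
  have hsupport : supportScore β r z ≤ (m - 1 : ℕ) * ∑ s ∈ range n, β s := by
    calc supportScore β r z ≤ #(univ.erase z) • ∑ s ∈ range n, β s :=
          sum_le_card_nsmul _ _ _ fun x _ => sum_le_sum_of_subset_of_nonneg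
            (range_subset_range.2 (card_finset_fin_le _)) fun s _ _ => hβ s
      _ = _ := by simp
  rw [hQ.apply_eq_pointScore_add_supportScore hd (l := l) rfl]
  linarith [hQ.apply_last_add_mul_sum_le hα hd (l := l) rfl]

end IsSymmRankMech

/-! ### Approval profiles -/

section TopSets

variable {ρ : Perm (Fin m)} {S T : Finset (Fin m)} {z : Fin m}

lemma topSet_card_eq_of_forall_lt (h : ∀ a ∈ S, ∀ b ∉ S, ρ a < ρ b) : topSet ρ #S = S := by
  have hsub : topSet ρ #S ⊆ S := fun b hb => by
    by_contra hbS
    refine (mem_topSet.1 hb).not_ge ?_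
    rw [← card_filter_perm_lt]
    exact card_le_card fun a ha => by simpa using h a ha b hbS
  refine eq_of_subset_of_card_le hsub (le_of_eq ?_)
  calc #S = #(univ.filter fun p : Fin m => (p : ℕ) < #S) := by
        rw [Fin.card_filter_val_lt, min_eq_right (card_finset_fin_le S)]
    _ = #(topSet ρ #S) := (card_equiv ρ (by simp)).symm

lemma exists_perm_topSet_eq (hST : S ⊆ T) (hz : z ∉ T) :
    ∃ ρ : Perm (Fin m), topSet ρ #S = S ∧ topSet ρ (#T + 1) = insert z T ∧ (ρ z : ℕ) = #T := by
  obtain ⟨ρ, hρ⟩ := exists_perm_lt_of_lt fun w =>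
    if w ∈ S then 0 else if w ∈ T then 1 else if w = z then 2 else 3
  have hT : topSet ρ #T = T := topSet_card_eq_of_forall_lt fun a ha b hb => hρ a b (by grind)
  have hzT : topSet ρ (#T + 1) = insert z T := by
    rw [← card_insert_of_notMem hz]
    exact topSet_card_eq_of_forall_lt fun a ha b hb => hρ a b (by grind)
  refine ⟨ρ, topSet_card_eq_of_forall_lt fun a ha b hb => hρ a b (by grind), hzT, ?_⟩
  have hlt : (ρ z : ℕ) < #T + 1 := by rw [← mem_topSet, hzT]; exact mem_insert_self z T
  have hle : ¬ (ρ z : ℕ) < #T := by rwa [← mem_topSet, hT]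
  omega

end TopSets

lemma exists_cyclic_sequence (hm : 1 < m) :
    ∃ (c : ℕ → Fin m) (z : Fin m), (∀ t, c t ≠ z) ∧
      (∀ a, Set.InjOn c (Set.Ico a (a + (m - 1)))) ∧
      ∀ N j, #{t ∈ range N | c t = j} ≤ N / (m - 1) + 1 := by
  have hm' : 0 < m - 1 := by omega
  have hlt (t : ℕ) : t % (m - 1) < m - 1 := Nat.mod_lt t hm'
  refine ⟨fun t => ⟨t % (m - 1), (hlt t).trans (by omega)⟩, ⟨m - 1, by omega⟩,
    fun t => by simpa using (hlt t).ne, fun a s hs t ht hst => ?_, fun N j => ?_⟩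
  · exact Nat.mod_injOn_Ico a (m - 1) (by simpa using hs) (by simpa using ht) (Fin.mk.inj hst)
  · have hsub : {t ∈ range N | (⟨t % (m - 1), (hlt t).trans (by omega)⟩ : Fin m) = j} ⊆
        {t ∈ range N | t ≡ j [MOD m - 1]} := by
      refine monotone_filter_right _ fun t _ ht => ?_
      rw [Nat.ModEq, ← ht, Nat.mod_mod]
    refine (card_le_card hsub).trans ?_
    rw [← Nat.count_eq_card_filter_range, Nat.count_modEq_card N hm']
    split_ifs <;> omega

/-- The voters ranking `j` among their first `q i` candidates. -/
def approvers (r : Fin n → Perm (Fin m)) (q : Fin n → ℕ) (j : Fin m) : Finset (Fin n) :=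
  {i | j ∈ topSet (r i) (q i)}

lemma card_filter_mem_image_Ico_le {α : Type*} [DecidableEq α] (c : ℕ → α) (j : α) {k g : ℕ}
    (hgk : g * k ≤ n) :
    #{i : Fin n | i < g ∧ j ∈ (Ico (i * k : ℕ) (i * k + k)).image c} ≤
      #{t ∈ range n | c t = j} := by
  rw [← card_map Fin.valEmbedding]
  refine (card_le_card fun i hi => ?_).trans (card_image_le (f := (· / k)))
  simp only [Finset.mem_map, mem_filter_univ, mem_image, mem_Ico, Fin.valEmbedding_apply] at hi
  obtain ⟨i, ⟨hig, t, ⟨hit, hti⟩, hct⟩, rfl⟩ := hi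
  rw [← Nat.succ_mul] at hti
  have htn : t < n := hti.trans_le ((Nat.mul_le_mul_right k hig).trans hgk)
  exact mem_image.2 ⟨t, by simp [htn, hct], Nat.div_eq_of_lt_le hit hti⟩

lemma exists_rankings {k g : ℕ} (hk : k + 1 < m) (hk0 : 0 < k) (hgk : g * k ≤ n) :
    ∃ (r : Fin n → Perm (Fin m)) (q : Fin n → ℕ) (z : Fin m), (∀ i, 0 < q i ∧ q i < m) ∧
      #(approvers r q z) = g ∧ (∀ i, (r i z : ℕ) = if i < g then k else m - 1) ∧
      ∀ j ≠ z, #(approvers r q j) ≤ 2 * (n / (m - 1) + 1) := by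
  obtain ⟨c, z, hcz, hc_inj, hc_load⟩ := exists_cyclic_sequence (m := m) (by omega)
  let block (i : ℕ) : Finset (Fin m) := (Ico (i * k) (i * k + k)).image c
  have hblock_card (i : ℕ) : #(block i) = k := by
    rw [card_image_of_injOn, Nat.card_Ico, Nat.add_sub_cancel_left]
    refine (hc_inj (i * k)).mono ?_
    rw [coe_Ico]
    exact Set.Ico_subset_Ico_right (by omega)
  have hblock_z (i : ℕ) : z ∉ block i := by simp [block, hcz]
  have hrank (i : Fin n) : ∃ (ρ : Perm (Fin m)) (q : ℕ), (0 < q ∧ q < m) ∧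
      topSet ρ q = (if i < g then insert z (block i) else {c i}) ∧
      (ρ z : ℕ) = if i < g then k else m - 1 := by
    split_ifs with hi
    · obtain ⟨ρ, -, hρ, hρz⟩ := exists_perm_topSet_eq (Subset.refl (block i)) (hblock_z i)
      rw [hblock_card] at hρ hρz
      exact ⟨ρ, k + 1, by omega, hρ, hρz⟩
    · obtain ⟨ρ, hρ, -, hρz⟩ := exists_perm_topSet_eq (S := {c i}) (T := univ.erase z) (z := z)
        (by simpa using hcz i) (by simp)
      exact ⟨ρ, 1, by omega, hρ, by simpa using hρz⟩
  choose r q hq htop hrz using hrank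
  refine ⟨r, q, z, hq, ?_, hrz, fun j hj => ?_⟩
  · have : approvers r q z = ({i | (i : ℕ) < g} : Finset (Fin n)) := by
      ext i
      by_cases hi : (i : ℕ) < g <;> simp [approvers, htop, hi, (hcz i).symm]
    rw [this, Fin.card_filter_val_lt, min_eq_right ((Nat.le_mul_of_pos_right g hk0).trans hgk)]
  · have hsub : approvers r q j ⊆ ({i | i < g ∧ j ∈ block i} : Finset (Fin n)) ∪
        ({i | c i = j} : Finset (Fin n)) := fun i => by
      simp only [approvers, htop, mem_filter_univ, mem_union]
      grind
    have hblocks : #{i : Fin n | i < g ∧ j ∈ block i} ≤ #{t ∈ range n | c t = j} :=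
      card_filter_mem_image_Ico_le c j hgk
    have hsingles : #{i : Fin n | c i = j} ≤ #{t ∈ range n | c t = j} := by
      simpa [eq_comm] using card_filter_mem_image_Ico_le c j (n.mul_one).le
    have hload := hc_load n j
    have := (card_le_card hsub).trans (card_union_le _ _)
    omega

/-- The preference profile in which voter `i` ranks the candidates by `r i` and values its first
`q i` candidates close to `1` and all others close to `0`, up to an error `ε`. -/
noncomputable def approvalProfile (r : Fin n → Perm (Fin m)) (q : Fin n → ℕ) (ε : ℝ) :
    Fin n → Fin m → ℝ :=
  fun i => topScore (q i) ε ∘ r i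

section ApprovalProfile

variable (r : Fin n → Perm (Fin m)) (q : Fin n → ℕ) {ε : ℝ}

lemma wel_approvalProfile_le (h0 : 0 ≤ ε) (j : Fin m) :
    Wel j (approvalProfile r q ε) ≤ #(approvers r q j) + n * ε := by
  calc Wel j (approvalProfile r q ε)
      ≤ ∑ i, ((if (r i j : ℕ) < q i then 1 else 0) + ε) := sum_le_sum fun _ _ => topScore_le h0 _
    _ = #(approvers r q j) + n * ε := by simp [sum_add_distrib, approvers]

lemma mul_card_approvers_le_wel_approvalProfile (h0 : 0 ≤ ε) (j : Fin m) :
    (1 - ε) * #(approvers r q j) ≤ Wel j (approvalProfile r q ε) := by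
  calc (1 - ε) * (#(approvers r q j) : ℝ)
      = ∑ i, (1 - ε) * (if (r i j : ℕ) < q i then 1 else 0) := by
        rw [← mul_sum, sum_boole]; simp only [approvers, mem_topSet]
    _ ≤ Wel j (approvalProfile r q ε) := sum_le_sum fun _ _ => le_topScore h0 _

end ApprovalProfile

lemma IsDist.sum_mul_le {p : Fin m → ℝ} (hp : IsDist p) {w : Fin m → ℝ} {z : Fin m} {a b : ℝ}
    (hz : p z ≤ a) (hwz : 0 ≤ w z) (hb : 0 ≤ b) (hw : ∀ j ≠ z, w j ≤ b) :
    ∑ j, p j * w j ≤ a * w z + b := by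
  rw [← add_sum_erase _ _ (mem_univ z)]
  refine add_le_add (mul_le_mul_of_nonneg_right hz hwz) ?_
  calc ∑ j ∈ univ.erase z, p j * w j
      ≤ ∑ j ∈ univ.erase z, p j * b :=
        sum_le_sum fun j hj => mul_le_mul_of_nonneg_left (hw j (ne_of_mem_erase hj)) (hp.1 j)
    _ ≤ ∑ j, p j * b := sum_le_univ_sum_of_nonneg fun j => mul_nonneg (hp.1 j) hb
    _ = b := by rw [← sum_mul, hp.2, one_mul]

lemma IsSymmRankMech.apply_le_of_rank_eq {Q : (Fin n → Perm (Fin m)) → Fin m → ℝ}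
    (hQ : IsSymmRankMech Q) (hm : 1 < m) {k g : ℕ} (hk : 0 < k) (hgk : g * k ≤ n)
    {r : Fin n → Perm (Fin m)} {z : Fin m}
    (hz : ∀ i : Fin n, (r i z : ℕ) = if i < g then k else m - 1) :
    Q r z ≤ 3 / m + 1 / k ^ 2 := by
  have hgk' : (g : ℝ) * k ≤ n := mod_cast hgk
  have hterm (i : Fin n) : 1 / ((r i z : ℝ) + 1) ≤ 1 / m + if i < g then 1 / (k : ℝ) else 0 := by
    rw [hz]
    split_ifs
    · exact le_add_of_nonneg_of_le (by positivity) (by gcongr; linarith)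
    · rw [add_zero, ← Nat.cast_add_one, Nat.sub_add_cancel hm.le]
  have hcard : #{i : Fin n | i < g} ≤ g := (Fin.card_filter_val_lt).trans_le (min_le_right _ _)
  have hsum : ∑ i, 1 / ((r i z : ℝ) + 1) ≤ (1 / m + 1 / k ^ 2) * n :=
    calc ∑ i, 1 / ((r i z : ℝ) + 1)
        ≤ ∑ i : Fin n, (1 / (m : ℝ) + if i < g then 1 / (k : ℝ) else 0) :=
          sum_le_sum fun i _ => hterm i
      _ = n / m + #{i : Fin n | i < g} / k := by
          rw [sum_add_distrib, ← sum_filter, sum_const, sum_const, card_fin]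
          simp only [nsmul_eq_mul, mul_one_div]
      _ ≤ n / m + g * k / k ^ 2 := by
          rw [pow_two, mul_div_mul_right _ _ (by positivity)]
          gcongr
      _ ≤ n / m + n / k ^ 2 := by gcongr
      _ = (1 / m + 1 / k ^ 2) * n := by ring
  calc Q r z ≤ 2 / m + (∑ i, 1 / ((r i z : ℝ) + 1)) / n := hQ.apply_le_two_div_add hm r z
    _ ≤ 2 / m + (1 / m + 1 / k ^ 2) :=
        add_le_add_right (div_le_of_le_mul₀ (by positivity) (by positivity) hsum) _
    _ = 3 / m + 1 / k ^ 2 := by ring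

lemma two_mul_div_add_le {k : ℕ} (hm : 1 < m) (hk : 0 < k) (hkm : k ^ 3 ≤ m)
    (hkn : k ^ 3 ≤ n) : ((2 * (n / (m - 1) + 1) : ℕ) : ℝ) + 1 / 2 ≤ 7 * n / k ^ 3 := by
  have hk' : (0 : ℝ) < k ^ 3 := by positivity
  have hkm' : (k : ℝ) ^ 3 ≤ m := mod_cast hkm
  have hkn' : (k : ℝ) ^ 3 ≤ n := mod_cast hkn
  have hm2 : (m : ℝ) / 2 ≤ (m - 1 : ℕ) := by
    have : (m : ℝ) ≤ 2 * (m - 1 : ℕ) := mod_cast (show m ≤ 2 * (m - 1) by omega)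
    linarith
  have hdiv : ((n / (m - 1) : ℕ) : ℝ) ≤ 2 * n / k ^ 3 :=
    calc ((n / (m - 1) : ℕ) : ℝ) ≤ n / (m - 1 : ℕ) := Nat.cast_div_le
      _ ≤ n / (k ^ 3 / 2) := by gcongr; linarith
      _ = 2 * n / k ^ 3 := by field_simp
  have hone : (1 : ℝ) ≤ n / k ^ 3 := (one_le_div hk').2 hkn'
  push_cast
  linarith [show 7 * (n : ℝ) / k ^ 3 = 2 * (2 * n / k ^ 3) + 3 * (n / k ^ 3) by ring]

lemma exists_approvalProfile {k : ℕ} (hk : 2 ≤ k) (hkm : k ^ 3 ≤ m) (hkn : k ^ 3 ≤ n) :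
    ∃ (r : Fin n → Perm (Fin m)) (q : Fin n → ℕ) (ε : ℝ) (z : Fin m),
      (∀ i, 0 < q i ∧ q i < m) ∧ 0 < ε ∧ ε ≤ 1 ∧
      (∀ i : Fin n, (r i z : ℕ) = if (i : ℕ) < n / k then k else m - 1) ∧
      n ≤ 4 * k * Wel z (approvalProfile r q ε) ∧
      ∀ j ≠ z, Wel j (approvalProfile r q ε) ≤ 7 * n / k ^ 3 := by
  have h4k : 4 * k ≤ k ^ 3 := by nlinarith [Nat.mul_le_mul hk hk]
  have hn : (1 : ℝ) ≤ n := mod_cast (show 1 ≤ n by omega)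
  obtain ⟨r, q, z, hq, hcard, hrz, hload⟩ := exists_rankings (n := n) (m := m) (k := k)
    (by omega) (by omega) (Nat.div_mul_le_self n k)
  have hε : (0 : ℝ) < 1 / (2 * n) := by positivity
  have hε' : 1 / (2 * n : ℝ) ≤ 1 / 2 := by gcongr; linarith
  refine ⟨r, q, 1 / (2 * n), z, hq, hε, by linarith, hrz, ?_, fun j hj => ?_⟩
  · have hn_le : n ≤ 2 * (n / k * k) := by
      have := Nat.lt_div_mul_add (a := n) (b := k) (by omega)
      have := Nat.mul_le_mul_right k (Nat.div_pos (show k ≤ n by omega) (by omega))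
      omega
    calc (n : ℝ) ≤ 4 * k * (1 / 2 * (n / k : ℕ)) := by
          have : (n : ℝ) ≤ 2 * ((n / k : ℕ) * k) := mod_cast hn_le
          linarith
      _ ≤ 4 * k * ((1 - 1 / (2 * n)) * (n / k : ℕ)) := by gcongr; linarith
      _ ≤ 4 * k * Wel z (approvalProfile r q (1 / (2 * n))) := by
          rw [← hcard]
          gcongr
          exact mul_card_approvers_le_wel_approvalProfile r q hε.le z
  · calc Wel j (approvalProfile r q (1 / (2 * n)))
        ≤ #(approvers r q j) + n * (1 / (2 * n)) := wel_approvalProfile_le r q hε.le j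
      _ ≤ (2 * (n / (m - 1) + 1) : ℕ) + 1 / 2 := by
          have : n * (1 / (2 * n)) = (1 / 2 : ℝ) := by field_simp
          rw [this]
          gcongr
          exact hload j hj
      _ ≤ 7 * n / k ^ 3 := two_mul_div_add_le (by omega) (by omega) hkm hkn

theorem exists_expWel_le_of_symm {J : (Fin n → Fin m → ℝ) → Fin m → ℝ} (hJ : MechU J)
    (hO : OrdinalMech J) (hT : Truthful J) (hN : Neutral J) (hA : AnonymousMech J) {k : ℕ}
    (hk : 2 ≤ k) (hkm : k ^ 3 ≤ m) (hkn : k ^ 3 ≤ n) :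
    ∃ u : Fin n → Fin m → ℝ, IsProfileU u ∧ ∃ z, expWel J u ≤ 32 / k ^ 2 * Wel z u := by
  have hm : 1 < m := by have := Nat.le_self_pow three_ne_zero k; omega
  have hk' : (2 : ℝ) ≤ k := mod_cast hk
  have hkm' : (k : ℝ) ^ 3 ≤ m := mod_cast hkm
  obtain ⟨r, q, ε, z, hq, hε, hε', hrz, hWz, hWj⟩ := exists_approvalProfile hk hkm hkn
  have hscores : IsProfileU fun i => topScore (m := m) (q i) ε := fun i =>
    isPrefU_topScore (hq i).1 (hq i).2 hε hε'
  have hQ := isSymmRankMech_rankOutcome hm hJ hO hT hN hA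
  set u := approvalProfile r q ε
  have hWz_nonneg : 0 ≤ Wel z u :=
    nonneg_of_mul_nonneg_right (n.cast_nonneg.trans hWz) (by positivity)
  have hJz : J u z ≤ 4 / k ^ 2 := by
    have hJu : J u = rankOutcome J r :=
      hO.eq_rankOutcome hm r (fun i => topScore_strictAnti hε hε') hscores
    rw [hJu]
    calc rankOutcome J r z ≤ 3 / m + 1 / k ^ 2 :=
          hQ.apply_le_of_rank_eq hm (by omega) (Nat.div_mul_le_self n k) hrz
      _ ≤ 3 / k ^ 2 + 1 / k ^ 2 := by
          gcongr
          exact (pow_le_pow_right₀ (by linarith) (by norm_num)).trans hkm'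
      _ = 4 / k ^ 2 := by ring
  have hWj' : ∀ j ≠ z, Wel j u ≤ 28 / k ^ 2 * Wel z u := fun j hj =>
    calc Wel j u ≤ 7 * n / k ^ 3 := hWj j hj
      _ ≤ 7 * (4 * k * Wel z u) / k ^ 3 := by gcongr
      _ = 28 / k ^ 2 * Wel z u := by field_simp; ring
  have huU : IsProfileU u := fun i => (hscores i).comp_perm (r i)
  refine ⟨u, huU, z, ?_⟩
  calc expWel J u ≤ 4 / k ^ 2 * Wel z u + 28 / k ^ 2 * Wel z u :=
        (hJ u huU).sum_mul_le hJz hWz_nonneg (by positivity) hWj'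
    _ = 32 / k ^ 2 * Wel z u := by ring

theorem exists_expWel_le {J : (Fin n → Fin m → ℝ) → Fin m → ℝ} (hm : 0 < m) (hJ : MechU J)
    (hO : OrdinalMech J) (hT : Truthful J) {k : ℕ} (hk : 2 ≤ k) (hkm : k ^ 3 ≤ m)
    (hkn : k ^ 3 ≤ n) :
    ∃ u : Fin n → Fin m → ℝ, IsProfileU u ∧ expWel J u ≤ 32 / k ^ 2 * Wel (RV hm u) u := by
  obtain ⟨u, hu, z, hz⟩ := exists_expWel_le_of_symm hJ.symmetrize hO.symmetrize hT.symmetrize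
    (neutral_symmetrize J) (anonymousMech_symmetrize J) hk hkm hkn
  obtain ⟨p, hp⟩ := exists_expWel_relabel_le_expWel_symmetrize J u
  refine ⟨relabel p u, hu.relabel p, (hp.trans hz).trans ?_⟩
  gcongr
  calc Wel z u = Wel (p.2.symm z) (relabel p u) := by rw [wel_relabel, apply_symm_apply]
    _ ≤ Wel (RV hm (relabel p u)) (relabel p u) := wel_le_wel_RV hm _ _

lemma exists_pow_three_le_lt {N : ℕ} (hN : 8 ≤ N) :
    ∃ k : ℕ, 2 ≤ k ∧ k ^ 3 ≤ N ∧ N < (k + 1) ^ 3 := by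
  have hle (k : ℕ) (hk : k ^ 3 ≤ N) : k ≤ N := (Nat.le_self_pow three_ne_zero k).trans hk
  set k := Nat.findGreatest (fun k => k ^ 3 ≤ N) N
  refine ⟨k, Nat.le_findGreatest (hle 2 hN) hN,
    Nat.findGreatest_spec (P := fun k => k ^ 3 ≤ N) (hle 2 hN) hN, ?_⟩
  by_contra! hlt
  exact (Nat.le_findGreatest (P := fun k => k ^ 3 ≤ N) (hle _ hlt) hlt).not_gt k.lt_succ_self

lemma inv_sq_le_mul_rpow {N k : ℕ} (hk : 0 < k) (hN : 0 < N) (hNk : N < (k + 1) ^ 3) :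
    1 / (k : ℝ) ^ 2 ≤ 4 * (N : ℝ) ^ (-(2 : ℝ) / 3) := by
  have hN' : (0 : ℝ) < N := mod_cast hN
  have hle : (N : ℝ) ≤ (2 * k) ^ 3 :=
    mod_cast hNk.le.trans (Nat.pow_le_pow_left (by omega : k + 1 ≤ 2 * k) 3)
  calc 1 / (k : ℝ) ^ 2 = 4 * ((2 * k : ℝ) ^ 3) ^ (-(2 : ℝ) / 3) := by
        rw [← Real.rpow_natCast (2 * k : ℝ) 3, ← Real.rpow_mul (by positivity),
          show ((3 : ℕ) : ℝ) * (-(2 : ℝ) / 3) = -2 by norm_num, Real.rpow_neg (by positivity),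
          Real.rpow_ofNat]
        field_simp
        norm_num
    _ ≤ 4 * (N : ℝ) ^ (-(2 : ℝ) / 3) :=
      mul_le_mul_of_nonneg_left (Real.rpow_le_rpow_of_nonpos hN' hle (by norm_num)) (by norm_num)

theorem stmt1_general :
    ∃ C : ℝ, 0 < C ∧ ∃ M₀ : ℕ, ∀ (m n : ℕ) (hm : 0 < m), M₀ ≤ min m n →
      ∀ J : (Fin n → Fin m → ℝ) → Fin m → ℝ, MechU J → OrdinalMech J → Truthful J →
        ∃ u : Fin n → Fin m → ℝ, IsProfileU u ∧
          expWel J u ≤ C * ((min m n : ℕ) : ℝ) ^ (-(2 : ℝ) / 3) * Wel (RV hm u) u := by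
  refine ⟨128, by norm_num, 8, fun m n hm hmn J hJ hO hT => ?_⟩
  obtain ⟨k, hk, hkN, hNk⟩ := exists_pow_three_le_lt hmn
  obtain ⟨u, hu, hle⟩ := exists_expWel_le hm hJ hO hT hk (hkN.trans (min_le_left m n))
    (hkN.trans (min_le_right m n))
  have hWel : 0 ≤ Wel (RV hm u) u := sum_nonneg fun i _ => ((hu i).1.1 _).1
  refine ⟨u, hu, hle.trans (mul_le_mul_of_nonneg_right ?_ hWel)⟩
  linarith [inv_sq_le_mul_rpow (N := min m n) (k := k) (by omega) (by omega) hNk,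
    mul_one_div (32 : ℝ) (k ^ 2)]

end Development

/-- there exist `C > 0` and `M₀` such that for all `m ≥ M₀` and
all `n ≥ m - 1 + ⌊m^{2/3}⌋`, every ordinal truthful mechanism on tie-free
profiles admits a tie-free profile `u` with
`E[Wel(J(u),u)] ≤ C · m^{-2/3} · Wel(RV(u),u)`. -/
theorem stmt1 :
    ∃ C : ℝ, 0 < C ∧ ∃ M₀ : ℕ,
      ∀ (m : ℕ) (_hM : M₀ ≤ m) (hm2 : 2 ≤ m),
        ∀ n : ℕ, m - 1 + ⌊(m : ℝ) ^ ((2 : ℝ)/3)⌋₊ ≤ n →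
          ∀ J : (Fin n → Fin m → ℝ) → Fin m → ℝ,
            MechU J → OrdinalMech J → Truthful J →
            ∃ u : Fin n → Fin m → ℝ, IsProfileU u ∧
              expWel J u ≤
                C * (m : ℝ) ^ (-(2 : ℝ)/3) * Wel (RV (show 0 < m from by omega) u) u := by
  obtain ⟨C, hC, M₀, h⟩ := stmt1_general
  refine ⟨C, hC, M₀, fun m hM hm2 n hn => ?_⟩
  have hfloor : 1 ≤ ⌊(m : ℝ) ^ ((2 : ℝ)/3)⌋₊ :=
    Nat.le_floor (by simpa using Real.one_le_rpow (mod_cast (by omega : 1 ≤ m)) (by norm_num))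
  have hmin : min m n = m := min_eq_left (by omega)
  have hbound := h m n (by omega)
  rw [hmin] at hbound
  exact hbound hM
end

section
/- (Gibbard 1977) Every mechanism on tie-free profiles that is both ordinal and truthful is a convex combination of mechanisms each of which is either (i) unilateral, ordinal and truthful, or (ii) duple and truthful. -/
open Finset

/-- `J` is a convex combination of mechanisms from the family `P`
(as distributions, on tie-free profiles). -/
def ConvexCombOf {n m : ℕ} (J : (Fin n → Fin m → ℝ) → Fin m → ℝ)
    (P : ((Fin n → Fin m → ℝ) → Fin m → ℝ) → Prop) : Prop :=
  ∃ (r : ℕ) (Js : Fin r → (Fin n → Fin m → ℝ) → Fin m → ℝ) (w : Fin r → ℝ),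
    (∀ k, P (Js k)) ∧ (∀ k, 0 ≤ w k) ∧ (∑ k, w k = 1) ∧
    ∀ u, IsProfileU u → ∀ j, J u j = ∑ k, w k * Js k u j

/-!
View an ordinal truthful mechanism as a function of the profile of rankings. Truthfulness says
that a voter who interchanges two candidates `x`, `y` adjacent in their ranking only transfers
probability between `x` and `y`. Interchanges of different pairs by different voters therefore do
not interact, and the amount transferred turns out to be the sum of a term depending only on the
voter's own ranking and a term depending only on which of the other voters prefer `x` to `y`.
Normalized so that its minimum is `0`, the second term is the increment of a monotone function of
the set of supporters of `x`, that is, the effect of a duple mechanism for the pair `x`, `y`.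
After subtracting these duple mechanisms, the effect of a change of one voter's ranking does not
depend on the other voters, so the remainder is a sum of functions of one ranking each. The duple
mechanisms never elect a candidate ranked last by everyone, hence the remainder gives such a
candidate the same nonnegative probability as the original mechanism, and the summands can be
shifted to be nonnegative.
-/

section Smul

variable {n m : ℕ} {K : (Fin n → Fin m → ℝ) → Fin m → ℝ}

lemma Truthful.smul (hK : Truthful K) {a : ℝ} (ha : 0 ≤ a) : Truthful (a • K) :=
  fun u hu i v hv => by
    simpa only [Pi.smul_apply, smul_eq_mul, mul_assoc, ← mul_sum] using
      mul_le_mul_of_nonneg_left (hK u hu i v hv) ha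

lemma OrdinalMech.smul (hK : OrdinalMech K) (a : ℝ) : OrdinalMech (a • K) :=
  fun u u' hu hu' h => congrArg (a • ·) (hK u u' hu hu' h)

lemma Unilateral.smul (hK : Unilateral K) (a : ℝ) : Unilateral (a • K) :=
  hK.imp fun _ h u u' hu hu' hi => congrArg (a • ·) (h u u' hu hu' hi)

lemma Duple.smul (hK : Duple K) (a : ℝ) : Duple (a • K) := by
  obtain ⟨x, y, hxy, h⟩ := hK
  exact ⟨x, y, hxy, fun u hu j hx hy => by simp [h u hu j hx hy]⟩

end Smul

namespace Gibbard

open Equiv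
open Function (update)
open scoped Matrix

section Sorting

variable {m : ℕ} {σ τ : Perm (Fin m)} {x y : Fin m}

lemma swap_lt_swap_iff_of_covBy {α : Type*} [LinearOrder α] {a b c d : α} (h : a ⋖ b)
    (hne : s(c, d) ≠ s(a, b)) : swap a b c < swap a b d ↔ c < d := by
  have hlt := h.lt
  have hle : ∀ e, e < b ↔ e ≤ a := fun e => h.lt_iff_le_left
  have hge : ∀ e, a < e ↔ b ≤ e := fun e => h.lt_iff_le_right
  simp only [ne_eq, Sym2.eq_iff] at hne
  grind

lemma mul_swap_lt_iff (h : σ x ⋖ σ y) {p q : Fin m} (hne : s(p, q) ≠ s(x, y)) :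
    (σ * swap x y) p < (σ * swap x y) q ↔ σ p < σ q := by
  rw [mul_swap_eq_swap_mul]
  refine swap_lt_swap_iff_of_covBy h fun e => hne ?_
  exact Sym2.map.injective σ.injective (by simpa using e)

lemma sum_mul_lt_sum_mul_swap (hσ : σ x < σ y) (hτ : τ y < τ x) :
    ∑ z, (σ z : ℤ) * τ z < ∑ z, ((σ * swap x y) z : ℤ) * τ z := by
  have hxy : x ≠ y := ne_of_apply_ne σ hσ.ne
  have hdiff : ∑ z, (((σ * swap x y) z : ℤ) * τ z - (σ z : ℤ) * τ z)
      = ((σ y : ℤ) - σ x) * ((τ x : ℤ) - τ y) := by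
    rw [Fintype.sum_eq_add x y hxy fun z hz => by simp [swap_apply_of_ne_of_ne hz.1 hz.2]]
    simp only [Perm.coe_mul, Function.comp_apply, swap_apply_left, swap_apply_right]
    ring
  have hpos : 0 < ((σ y : ℤ) - σ x) * ((τ x : ℤ) - τ y) :=
    mul_pos (sub_pos.2 (by exact_mod_cast hσ)) (sub_pos.2 (by exact_mod_cast hτ))
  rwa [← hdiff, Finset.sum_sub_distrib, sub_pos] at hpos

lemma exists_covBy_of_ne (h : σ ≠ τ) : ∃ x y, σ x ⋖ σ y ∧ τ y < τ x := by
  contrapose! h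
  have hmono : StrictMono (τ ∘ σ.symm) := (strictMono_iff_forall_covBy _).2 fun a b hab =>
    (h (σ.symm a) (σ.symm b) (by simpa using hab)).lt_of_ne (by simpa using hab.lt.ne)
  have hid : τ ∘ σ.symm = id := hmono.eq_id
  ext z
  simpa using congrArg Fin.val (congrFun hid (σ z)).symm

theorem sorting_induction {C : Perm (Fin m) → Prop} (τ : Perm (Fin m)) (base : C τ)
    (step : ∀ σ x y, σ x ⋖ σ y → τ y < τ x → C (σ * swap x y) → C σ) (σ : Perm (Fin m)) :
    C σ := by
  by_contra hσ
  obtain ⟨ρ, hρ, hmax⟩ := Set.exists_max_image {ρ | ¬ C ρ} (fun ρ => ∑ z, (ρ z : ℤ) * τ z)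
    (Set.toFinite _) ⟨σ, hσ⟩
  obtain ⟨x, y, hxy, hτ⟩ := exists_covBy_of_ne fun h : ρ = τ => hρ (h ▸ base)
  refine hρ (step ρ x y hxy hτ ?_)
  by_contra hswap
  exact (hmax _ hswap).not_gt (sum_mul_lt_sum_mul_swap hxy.lt hτ)

lemma eq_of_mul_swap_eq {γ : Type*} {g : Perm (Fin m) → γ}
    (hg : ∀ σ x y, σ x ⋖ σ y → g (σ * swap x y) = g σ) (σ τ : Perm (Fin m)) : g σ = g τ :=
  sorting_induction (C := fun σ => g σ = g τ) τ rfl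
    (fun σ x y h _ ih => (hg σ x y h).symm.trans ih) σ

lemma exists_covBy (hxy : x ≠ y) : ∃ σ : Perm (Fin m), σ x ⋖ σ y := by
  have hm : 1 < m := Fin.nontrivial_iff_two_le.1 ⟨x, y, hxy⟩
  obtain ⟨σ, hσ⟩ := Perm.exists_extending_pair ![x, y] ![⟨0, by omega⟩, ⟨1, hm⟩]
    (by simpa [Function.Injective, Fin.forall_fin_two, eq_comm] using hxy)
    (by simp [Function.Injective, Fin.forall_fin_two])
  refine ⟨σ, ?_⟩
  have hx : σ x = ⟨0, by omega⟩ := hσ 0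
  have hy : σ y = ⟨1, hm⟩ := hσ 1
  simp [hx, hy, Fin.covBy_iff]

end Sorting

section Transfer

variable {m : ℕ} {x y z : Fin m}

/-- The transfer of one unit of winning probability from candidate `y` to candidate `x`. -/
def transfer (x y : Fin m) : Fin m → ℝ := Pi.single x 1 - Pi.single y 1

lemma transfer_apply_left (h : x ≠ y) : transfer x y x = 1 := by simp [transfer, h]

lemma transfer_apply_right (h : x ≠ y) : transfer x y y = -1 := by simp [transfer, h.symm]

lemma transfer_apply_of_ne (hx : z ≠ x) (hy : z ≠ y) : transfer x y z = 0 := by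
  simp [transfer, hx, hy]

lemma neg_transfer (x y : Fin m) : -transfer x y = transfer y x := neg_sub _ _

lemma eq_zero_of_smul_transfer_eq {w : Fin m} (hxy : x ≠ y) (hne : s(x, y) ≠ s(z, w)) {c d : ℝ}
    (h : c • transfer x y = d • transfer z w) : c = 0 := by
  by_cases hx : x ≠ z ∧ x ≠ w
  · simpa [transfer_apply_left hxy, transfer_apply_of_ne hx.1 hx.2] using congrFun h x
  · have hy : y ≠ z ∧ y ≠ w := by
      simp only [ne_eq, Sym2.eq_iff] at hne
      grind
    simpa [transfer_apply_right hxy, transfer_apply_of_ne hy.1 hy.2] using congrFun h y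

lemma sub_eq_smul_transfer_comm {U : Perm (Fin m) → Fin m → ℝ} {σ : Perm (Fin m)} {r : ℝ} :
    U (σ * swap x y * swap y x) - U (σ * swap x y) = r • transfer y x ↔
      U (σ * swap x y) - U σ = r • transfer x y := by
  rw [swap_comm y x, mul_assoc, swap_mul_self, mul_one, ← neg_transfer, smul_neg,
    ← neg_sub, neg_inj]

lemma transfer_dotProduct (x y : Fin m) (v : Fin m → ℝ) : transfer x y ⬝ᵥ v = v x - v y := by
  simp [transfer]

end Transfer

/-- A lottery-valued function of one ranking `σ` (`σ z` is the position of candidate `z`, larger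
positions being better) such that raising a candidate `x` over the candidate `y` just above it can
only transfer probability from `y` to `x`. -/
def SwapMonotone {m : ℕ} (U : Perm (Fin m) → Fin m → ℝ) : Prop :=
  ∀ σ x y, σ x ⋖ σ y → ∃ r : ℝ, 0 ≤ r ∧ U (σ * swap x y) - U σ = r • transfer x y

section SwapMonotone

variable {m : ℕ} {U : Perm (Fin m) → Fin m → ℝ}

theorem SwapMonotone.dotProduct_le (hU : SwapMonotone U) {τ : Perm (Fin m)} {v : Fin m → ℝ}
    (hv : Monovary v τ) (σ : Perm (Fin m)) : U σ ⬝ᵥ v ≤ U τ ⬝ᵥ v := by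
  refine sorting_induction (C := fun σ => U σ ⬝ᵥ v ≤ U τ ⬝ᵥ v) τ le_rfl ?_ σ
  intro σ x y hxy hτ ih
  obtain ⟨r, hr, hU⟩ := hU σ x y hxy
  have hgain : (U (σ * swap x y) - U σ) ⬝ᵥ v = r * (v x - v y) := by
    rw [hU, smul_dotProduct, transfer_dotProduct, smul_eq_mul]
  rw [sub_dotProduct] at hgain
  linarith [mul_nonneg hr (sub_nonneg.2 (hv hτ))]

lemma SwapMonotone.sum_eq (hU : SwapMonotone U) (σ τ : Perm (Fin m)) :
    ∑ z, U σ z = ∑ z, U τ z := by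
  simp only [← dotProduct_one]
  exact le_antisymm (hU.dotProduct_le (monovary_const_left _ 1) σ)
    (hU.dotProduct_le (monovary_const_left _ 1) τ)

lemma SwapMonotone.apply_le_of_forall_le (hU : SwapMonotone U) {τ : Perm (Fin m)} {z : Fin m}
    (hz : ∀ w, τ z ≤ τ w) (σ : Perm (Fin m)) : U τ z ≤ U σ z := by
  have hv : Monovary (Pi.single z (-1) : Fin m → ℝ) τ := fun a b hab => by
    have hb : b ≠ z := by rintro rfl; exact (hz a).not_gt hab
    obtain rfl | ha := eq_or_ne a z <;> simp [*]
  simpa using hU.dotProduct_le hv σ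

lemma monovary_ite_le (σ : Perm (Fin m)) (t : Fin m) :
    Monovary (fun w => if t ≤ σ w then (1 : ℝ) else 0) σ := fun a b hab => by
  dsimp only
  split_ifs with ha hb
  exacts [le_rfl, absurd (ha.trans hab.le) hb, zero_le_one, le_rfl]

lemma monovary_ite_lt (σ : Perm (Fin m)) (t : Fin m) :
    Monovary (fun w => if t < σ w then (1 : ℝ) else 0) σ := fun a b hab => by
  dsimp only
  split_ifs with ha hb
  exacts [le_rfl, absurd (ha.trans hab) hb, zero_le_one, le_rfl]

lemma single_eq_ite_le_sub_ite_lt (σ : Perm (Fin m)) (z : Fin m) :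
    (Pi.single z 1 : Fin m → ℝ)
      = (fun w => if σ z ≤ σ w then 1 else 0) - fun w => if σ z < σ w then 1 else 0 := by
  funext w
  obtain rfl | hw := eq_or_ne w z
  · simp
  · have : σ z ≠ σ w := fun e => hw (σ.injective e).symm
    simp [hw, this.le_iff_lt]

lemma eq_smul_transfer_of_dotProduct_eq_zero {σ : Perm (Fin m)} {x y : Fin m} {d : Fin m → ℝ}
    (h : σ x ⋖ σ y)
    (hd : ∀ v, Monovary v σ → Monovary v ⇑(σ * swap x y) → d ⬝ᵥ v = 0) :
    d = d x • transfer x y := by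
  have hne : x ≠ y := ne_of_apply_ne σ h.lt.ne
  have hother : ∀ z, z ≠ x → z ≠ y → d z = 0 := fun z hx hy => by
    have hz : (σ * swap x y) z = σ z := by simp [swap_apply_of_ne_of_ne hx hy]
    have hlt : ∀ w, σ z < σ w ↔ σ z < (σ * swap x y) w := fun w => by
      rw [← mul_swap_lt_iff h (p := z) (q := w) (by simp [hx, hy]), hz]
    have hle : ∀ w, σ z ≤ σ w ↔ σ z ≤ (σ * swap x y) w := fun w => by
      rw [← not_lt, ← mul_swap_lt_iff h (p := w) (q := z) (by simp [hx, hy]), hz, not_lt]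
    rw [← dotProduct_single_one d, single_eq_ite_le_sub_ite_lt σ, dotProduct_sub,
      hd _ (monovary_ite_le σ _) (by simpa only [hle] using monovary_ite_le _ (σ z)),
      hd _ (monovary_ite_lt σ _) (by simpa only [hlt] using monovary_ite_lt _ (σ z)), sub_zero]
  have hsum : d x + d y = 0 := by
    rw [← Fintype.sum_eq_add x y hne fun z hz => hother z hz.1 hz.2, ← dotProduct_one]
    exact hd 1 (monovary_const_left _ _) (monovary_const_left _ _)
  funext z
  obtain rfl | hzx := eq_or_ne z x
  · simp [transfer_apply_left hne]
  obtain rfl | hzy := eq_or_ne z y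
  · simpa [transfer_apply_right hne] using eq_neg_of_add_eq_zero_right hsum
  · simp [transfer_apply_of_ne hzx hzy, hother z hzx hzy]

theorem swapMonotone_of_dotProduct_le
    (hU : ∀ (σ τ : Perm (Fin m)) (v : Fin m → ℝ), Monovary v τ → U σ ⬝ᵥ v ≤ U τ ⬝ᵥ v) :
    SwapMonotone U := by
  intro σ x y hxy
  have htransfer := eq_smul_transfer_of_dotProduct_eq_zero (d := U (σ * swap x y) - U σ) hxy
    fun v h h' => by
      rw [sub_dotProduct, sub_eq_zero]
      exact le_antisymm (hU _ _ _ h) (hU _ _ _ h')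
  refine ⟨_, ?_, htransfer⟩
  have hgain := hU (σ * swap x y) σ (fun z => (σ z : ℝ)) fun a b hab => by simpa using hab.le
  rw [← sub_nonpos, ← sub_dotProduct, htransfer, smul_dotProduct, transfer_dotProduct] at hgain
  have hlt : (σ x : ℝ) < σ y := by exact_mod_cast hxy.lt
  exact nonneg_of_mul_nonpos_left hgain (sub_neg.2 hlt)

end SwapMonotone

section Profiles

variable {ι β γ : Type*} [Finite ι] [DecidableEq ι]

lemma eq_of_update_eq {r : ι → β → β → Prop} {g : (ι → β) → γ}
    (hg : ∀ P i b, r i (P i) b → g (update P i b) = g P) {P Q : ι → β}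
    (hPQ : ∀ i, r i (P i) (Q i)) : g P = g Q := by
  cases nonempty_fintype ι
  suffices h : ∀ s : Finset ι, g (s.piecewise Q P) = g P by simpa using (h univ).symm
  intro s
  induction s using Finset.induction_on with
  | empty => simp
  | insert i s hi ih =>
    rw [piecewise_insert, ← ih]
    exact hg _ i _ (by simpa [hi] using hPQ i)

end Profiles

section LocallyMonotone

variable {ι : Type*} [DecidableEq ι] {m : ℕ} {F : (ι → Perm (Fin m)) → Fin m → ℝ}
  {P Q : ι → Perm (Fin m)} {i j : ι} {σ τ ρ : Perm (Fin m)} {x y z w : Fin m}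

/-- A lottery-valued function of a profile of rankings that is `SwapMonotone` in the ranking of
each voter. -/
def LocallyMonotone (F : (ι → Perm (Fin m)) → Fin m → ℝ) : Prop :=
  ∀ P i, SwapMonotone fun σ => F (update P i σ)

lemma LocallyMonotone.sum_eq [Finite ι] (hF : LocallyMonotone F) (P Q : ι → Perm (Fin m)) :
    ∑ z, F P z = ∑ z, F Q z :=
  eq_of_update_eq (r := fun _ _ _ => True) (g := fun P => ∑ z, F P z)
    (fun P i σ _ => by simpa using (hF P i).sum_eq σ (P i)) fun _ => trivial

lemma SwapMonotone.locallyMonotone {U : Perm (Fin m) → Fin m → ℝ} (hU : SwapMonotone U) (i : ι) :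
    LocallyMonotone fun P => U (P i) := by
  intro P j
  obtain rfl | hij := eq_or_ne i j
  · simpa only [Function.update_self] using hU
  · exact fun σ x y _ => ⟨0, le_rfl, by simp [Function.update_of_ne hij]⟩

/-- The probability that candidate `x` gains when, in the profile obtained from `P` by giving
voter `i` the ranking `σ`, voter `i` interchanges `x` and `y`. -/
def effect (F : (ι → Perm (Fin m)) → Fin m → ℝ) (i : ι) (σ : Perm (Fin m)) (x y : Fin m)
    (P : ι → Perm (Fin m)) : ℝ :=
  F (update P i (σ * swap x y)) x - F (update P i σ) x

lemma effect_update_self (P : ι → Perm (Fin m)) (τ : Perm (Fin m)) :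
    effect F i σ x y (update P i τ) = effect F i σ x y P := by
  simp [effect]

lemma effect_update_sub_effect_update (hij : i ≠ j) (P : ι → Perm (Fin m)) :
    effect F i σ x y (update P j (τ * swap x y)) - effect F i σ x y (update P j τ)
      = effect F j τ x y (update P i (σ * swap x y)) - effect F j τ x y (update P i σ) := by
  simp only [effect, Function.update_comm hij.symm]
  ring

lemma effect_eq_of_update_sub_update_eq (hxy : x ≠ y) {r : ℝ}
    (h : F (update P i (σ * swap x y)) - F (update P i σ) = r • transfer x y) :
    effect F i σ x y P = r := by
  simpa [effect, transfer_apply_left hxy] using congrFun h x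

lemma LocallyMonotone.update_sub_update (hF : LocallyMonotone F) (h : σ x ⋖ σ y)
    (P : ι → Perm (Fin m)) (i : ι) :
    F (update P i (σ * swap x y)) - F (update P i σ) = effect F i σ x y P • transfer x y := by
  obtain ⟨r, -, hr⟩ := hF P i σ x y h
  rwa [effect_eq_of_update_sub_update_eq (ne_of_apply_ne σ h.lt.ne) hr]

lemma LocallyMonotone.effect_nonneg (hF : LocallyMonotone F) (h : σ x ⋖ σ y)
    (P : ι → Perm (Fin m)) (i : ι) : 0 ≤ effect F i σ x y P := by
  obtain ⟨r, hr0, hr⟩ := hF P i σ x y h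
  rwa [effect_eq_of_update_sub_update_eq (ne_of_apply_ne σ h.lt.ne) hr]

lemma LocallyMonotone.effect_update_mul_swap (hF : LocallyMonotone F) (h : σ x ⋖ σ y)
    (hij : i ≠ j) (hτ : τ z ⋖ τ w) (hne : s(x, y) ≠ s(z, w)) (P : ι → Perm (Fin m)) :
    effect F i σ x y (update P j (τ * swap z w)) = effect F i σ x y (update P j τ) := by
  -- The second difference of `F` along the two interchanges is a multiple of both transfers.
  have hdiff : (effect F i σ x y (update P j (τ * swap z w)) - effect F i σ x y (update P j τ)) •
        transfer x y
      = (effect F j τ z w (update P i (σ * swap x y)) - effect F j τ z w (update P i σ)) •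
        transfer z w := by
    simp only [sub_smul, ← hF.update_sub_update h, ← hF.update_sub_update hτ,
      Function.update_comm hij.symm]
    abel
  exact sub_eq_zero.1 (eq_zero_of_smul_transfer_eq (ne_of_apply_ne σ h.lt.ne) hne hdiff)

lemma LocallyMonotone.effect_update_congr (hF : LocallyMonotone F) (h : σ x ⋖ σ y) (hij : i ≠ j)
    (P : ι → Perm (Fin m)) (hρ : ρ y < ρ x ↔ τ y < τ x) :
    effect F i σ x y (update P j ρ) = effect F i σ x y (update P j τ) := by
  revert hρ
  refine sorting_induction (C := fun ρ => (ρ y < ρ x ↔ τ y < τ x) →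
    effect F i σ x y (update P j ρ) = effect F i σ x y (update P j τ)) τ (fun _ => rfl) ?_ ρ
  intro ρ z w hzw hτ ih hρ
  have hne : s(x, y) ≠ s(z, w) := by
    simp only [ne_eq, Sym2.eq_iff]
    rintro (⟨rfl, rfl⟩ | ⟨rfl, rfl⟩)
    · exact hzw.lt.asymm (hρ.2 hτ)
    · exact hτ.asymm (hρ.1 hzw.lt)
  rw [← hF.effect_update_mul_swap h hij hzw hne]
  exact ih ((mul_swap_lt_iff hzw (by rwa [Sym2.eq_swap])).trans hρ)

lemma LocallyMonotone.effect_congr [Finite ι] (hF : LocallyMonotone F) (h : σ x ⋖ σ y)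
    (hPQ : ∀ j ≠ i, P j y < P j x ↔ Q j y < Q j x) :
    effect F i σ x y P = effect F i σ x y Q := by
  refine eq_of_update_eq (r := fun j σ τ => j ≠ i → (σ y < σ x ↔ τ y < τ x)) ?_ hPQ
  intro P j τ hj
  obtain rfl | hji := eq_or_ne j i
  · exact effect_update_self P τ
  · simpa using (hF.effect_update_congr h hji.symm P (hj hji)).symm

-- The change is a difference of effects of voter `j`, and these see only which of `x` and `y`
-- voter `i` prefers; hence it is the same for `σ` and `τ`.
lemma LocallyMonotone.effect_sub_effect_update_mul_swap (hF : LocallyMonotone F) (hσ : σ x ⋖ σ y)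
    (hτ : τ x ⋖ τ y) (hρ : ρ x ⋖ ρ y) (hij : i ≠ j) (P : ι → Perm (Fin m)) :
    effect F i σ x y (update P j (ρ * swap x y)) - effect F i τ x y (update P j (ρ * swap x y))
      = effect F i σ x y (update P j ρ) - effect F i τ x y (update P j ρ) := by
  have hup : effect F j ρ x y (update P i (σ * swap x y))
      = effect F j ρ x y (update P i (τ * swap x y)) :=
    hF.effect_update_congr hρ hij.symm P (by simp [hσ.lt, hτ.lt])
  have hdown : effect F j ρ x y (update P i σ) = effect F j ρ x y (update P i τ) :=
    hF.effect_update_congr hρ hij.symm P (by simp [hσ.lt.asymm, hτ.lt.asymm])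
  rw [sub_eq_sub_iff_sub_eq_sub, effect_update_sub_effect_update hij,
    effect_update_sub_effect_update hij, hup, hdown]

lemma LocallyMonotone.effect_sub_effect_eq [Finite ι] (hF : LocallyMonotone F) (hσ : σ x ⋖ σ y)
    (hτ : τ x ⋖ τ y) (i : ι) (P Q : ι → Perm (Fin m)) :
    effect F i σ x y P - effect F i τ x y P = effect F i σ x y Q - effect F i τ x y Q := by
  let g (P : ι → Perm (Fin m)) : ℝ := effect F i σ x y P - effect F i τ x y P
  suffices h : ∀ P j, i ≠ j → ∀ ρ z w, ρ z ⋖ ρ w →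
      g (update P j (ρ * swap z w)) = g (update P j ρ) by
    refine eq_of_update_eq (r := fun _ _ _ => True) (g := g) (fun P j ρ _ => ?_) fun _ => trivial
    obtain rfl | hij := eq_or_ne i j
    · simp only [g, effect_update_self]
    · simpa using eq_of_mul_swap_eq (g := fun ρ => g (update P j ρ)) (h P j hij) ρ (P j)
  intro P j hij ρ z w hρ
  by_cases hne : s(x, y) = s(z, w)
  · obtain ⟨rfl, rfl⟩ | ⟨rfl, rfl⟩ := Sym2.eq_iff.1 hne
    · exact hF.effect_sub_effect_update_mul_swap hσ hτ hρ hij P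
    · have h := hF.effect_sub_effect_update_mul_swap hσ hτ (ρ := ρ * swap x y)
        (by simpa using hρ) hij P
      rw [mul_assoc, swap_mul_self, mul_one] at h
      rw [swap_comm y x]
      exact h.symm
  · simp only [g, hF.effect_update_mul_swap hσ hij hρ hne, hF.effect_update_mul_swap hτ hij hρ hne]

end LocallyMonotone

section DupleRule

variable {ι : Type*} [Fintype ι] {m : ℕ} {P : ι → Perm (Fin m)} {i : ι} {σ τ : Perm (Fin m)}
  {x y z w : Fin m} {D : Finset ι → ℝ}

/-- The set of voters who prefer candidate `x` to candidate `y`. -/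
def supporters (x y : Fin m) (P : ι → Perm (Fin m)) : Finset ι := {i | P i y < P i x}

lemma mem_supporters : i ∈ supporters x y P ↔ P i y < P i x := by simp [supporters]

/-- The voting rule with only two possible winners `x` and `y` in which `x` wins with weight
`D T` when `T` is the set of its supporters, the total weight being `D univ`. -/
def dupleRule (D : Finset ι → ℝ) (x y : Fin m) (P : ι → Perm (Fin m)) : Fin m → ℝ :=
  Pi.single x (D (supporters x y P)) + Pi.single y (D univ - D (supporters x y P))

lemma dupleRule_nonneg (hD₀ : D ∅ = 0) (hD : Monotone D) : 0 ≤ dupleRule D x y P :=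
  add_nonneg (Pi.single_nonneg.2 (hD₀ ▸ hD (empty_subset _)))
    (Pi.single_nonneg.2 (sub_nonneg.2 (hD (subset_univ _))))

lemma dupleRule_apply_of_ne (hx : z ≠ x) (hy : z ≠ y) : dupleRule D x y P z = 0 := by
  simp [dupleRule, hx, hy]

lemma dupleRule_sub_dupleRule (Q : ι → Perm (Fin m)) :
    dupleRule D x y P - dupleRule D x y Q
      = (D (supporters x y P) - D (supporters x y Q)) • transfer x y := by
  simp only [dupleRule, transfer, smul_sub, ← Pi.single_smul, smul_eq_mul, mul_one,
    Pi.single_sub]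
  abel

lemma dupleRule_apply_eq_zero_of_forall_le (hxy : x ≠ y) (hD₀ : D ∅ = 0)
    (hz : ∀ i w, P i z ≤ P i w) : dupleRule D x y P z = 0 := by
  obtain rfl | hx := eq_or_ne z x
  · have : supporters z y P = ∅ := filter_eq_empty_iff.2 fun i _ => (hz i y).not_gt
    simp [dupleRule, this, hD₀, hxy]
  obtain rfl | hy := eq_or_ne z y
  · have : supporters x z P = univ := filter_eq_self.2 fun i _ =>
      (hz i x).lt_of_ne ((P i).injective.ne hx)
    simp [dupleRule, this, hxy.symm]
  · exact dupleRule_apply_of_ne hx hy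

variable [DecidableEq ι]

lemma supporters_update_congr (h : σ y < σ x ↔ τ y < τ x) :
    supporters x y (update P i σ) = supporters x y (update P i τ) := by
  ext j
  obtain rfl | hj := eq_or_ne j i <;> simp [mem_supporters, *]

lemma supporters_update_of_lt (h : σ y < σ x) :
    supporters x y (update P i σ) = insert i (supporters x y P) := by
  ext j
  obtain rfl | hj := eq_or_ne j i <;> simp [mem_supporters, *]

lemma supporters_update_of_gt (h : σ x < σ y) :
    supporters x y (update P i σ) = (supporters x y P).erase i := by
  ext j
  obtain rfl | hj := eq_or_ne j i <;> simp [mem_supporters, h.asymm, *]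

lemma dupleRule_update_mul_swap (h : σ x ⋖ σ y) :
    dupleRule D x y (update P i (σ * swap x y)) - dupleRule D x y (update P i σ)
      = (D (insert i (supporters x y P)) - D ((supporters x y P).erase i)) • transfer x y := by
  rw [dupleRule_sub_dupleRule, supporters_update_of_lt (by simpa using h.lt),
    supporters_update_of_gt h.lt]

lemma dupleRule_update_mul_swap_of_ne (h : σ z ⋖ σ w) (hne : s(x, y) ≠ s(z, w)) :
    dupleRule D x y (update P i (σ * swap z w)) = dupleRule D x y (update P i σ) := by
  have hsupp : supporters x y (update P i (σ * swap z w)) = supporters x y (update P i σ) :=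
    supporters_update_congr (mul_swap_lt_iff h (by rwa [Sym2.eq_swap]))
  simp only [dupleRule, hsupp]

lemma locallyMonotone_dupleRule (hD : Monotone D) : LocallyMonotone (dupleRule D x y) := by
  have hgain : ∀ (P : ι → Perm (Fin m)) i,
      0 ≤ D (insert i (supporters x y P)) - D ((supporters x y P).erase i) := fun P i =>
    sub_nonneg.2 (hD ((erase_subset _ _).trans (subset_insert _ _)))
  intro P i σ z w h
  by_cases hne : s(x, y) = s(z, w)
  · obtain ⟨rfl, rfl⟩ | ⟨rfl, rfl⟩ := Sym2.eq_iff.1 hne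
    · exact ⟨_, hgain P i, dupleRule_update_mul_swap h⟩
    · exact ⟨_, hgain P i, (sub_eq_smul_transfer_comm (U := fun σ => dupleRule D x y
        (update P i σ))).1 (dupleRule_update_mul_swap (by simpa using h))⟩
  · exact ⟨0, le_rfl, by simp [dupleRule_update_mul_swap_of_ne h hne]⟩

end DupleRule

section Decomposition

variable {ι : Type*} [Fintype ι] [DecidableEq ι] {m : ℕ}
  {F : (ι → Perm (Fin m)) → Fin m → ℝ} {x y : Fin m}

-- By `effect_sub_effect_eq` an effect depends on the supporters of `x` only through a term that
-- does not involve `σ`; subtracting the minimal effects makes this term the increment of a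
-- monotone `D`.
lemma LocallyMonotone.exists_effect_eq (hF : LocallyMonotone F) (hxy : x ≠ y) :
    ∃ D : Finset ι → ℝ, D ∅ = 0 ∧ Monotone D ∧ ∀ i σ, σ x ⋖ σ y → ∃ r, 0 ≤ r ∧ ∀ P,
      effect F i σ x y P
        = r + (D (insert i (supporters x y P)) - D ((supporters x y P).erase i)) := by
  obtain ⟨τ, hτ⟩ := exists_covBy hxy
  choose Q hQ using fun i => Finite.exists_min (effect F i τ x y)
  let B (T : Finset ι) : ι → Perm (Fin m) := T.piecewise (fun _ => τ * swap x y) fun _ => τ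
  let D (T : Finset ι) : ℝ := F (B T) x - F (B ∅) x - ∑ i ∈ T, effect F i τ x y (Q i)
  have hB : ∀ T i, B T i y < B T i x ↔ i ∈ T := fun T i => by
    by_cases hi : i ∈ T <;> simp [B, hi, hτ.lt, hτ.lt.asymm]
  have hD : ∀ T i, i ∉ T →
      D (insert i T) - D T = effect F i τ x y (B T) - effect F i τ x y (Q i) := fun T i hi => by
    have hinsert : B (insert i T) = update (B T) i (τ * swap x y) := piecewise_insert ..
    have hself : update (B T) i τ = B T := by
      rw [Function.update_eq_self_iff]
      simp [B, hi]
    simp only [D, sum_insert hi, effect, hinsert, hself]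
    ring
  refine ⟨D, by simp [D], monotone_iff_forall_le_insert.2 fun T i hi => ?_, fun i σ hσ => ?_⟩
  · linarith [hD T i hi, hQ i (B T)]
  · refine ⟨effect F i σ x y (Q i), hF.effect_nonneg hσ _ _, fun P => ?_⟩
    have hcongr : effect F i τ x y (B ((supporters x y P).erase i)) = effect F i τ x y P :=
      hF.effect_congr hτ fun j hj => by simp [hB, hj, mem_supporters]
    have hincr := hD ((supporters x y P).erase i) i (by simp)
    have hinsert : insert i ((supporters x y P).erase i) = insert i (supporters x y P) := by grind
    rw [hinsert] at hincr
    linarith [hF.effect_sub_effect_eq hσ hτ i P (Q i)]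

lemma LocallyMonotone.exists_dupleRule (hF : LocallyMonotone F) (hxy : x ≠ y) :
    ∃ D : Finset ι → ℝ, D ∅ = 0 ∧ Monotone D ∧ ∀ i σ z w, σ z ⋖ σ w → s(x, y) = s(z, w) →
      ∃ r : ℝ, 0 ≤ r ∧ ∀ P, (F (update P i (σ * swap z w)) - F (update P i σ))
        - (dupleRule D x y (update P i (σ * swap z w)) - dupleRule D x y (update P i σ))
          = r • transfer z w := by
  obtain ⟨D, hD₀, hD, heff⟩ := hF.exists_effect_eq hxy
  have hgain : ∀ i σ, σ x ⋖ σ y → ∃ r : ℝ, 0 ≤ r ∧ ∀ P,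
      (F (update P i (σ * swap x y)) - F (update P i σ))
        - (dupleRule D x y (update P i (σ * swap x y)) - dupleRule D x y (update P i σ))
          = r • transfer x y := fun i σ h => by
    obtain ⟨r, hr₀, hr⟩ := heff i σ h
    refine ⟨r, hr₀, fun P => ?_⟩
    rw [hF.update_sub_update h, dupleRule_update_mul_swap h, hr, ← sub_smul, add_sub_cancel_right]
  refine ⟨D, hD₀, hD, fun i σ z w h hzw => ?_⟩
  obtain ⟨rfl, rfl⟩ | ⟨rfl, rfl⟩ := Sym2.eq_iff.1 hzw
  · exact hgain i σ h
  · obtain ⟨r, hr₀, hr⟩ := hgain i (σ * swap y x) (by simpa using h)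
    refine ⟨r, hr₀, fun P => ?_⟩
    rw [sub_sub_sub_comm]
    refine (sub_eq_smul_transfer_comm (U := fun σ => F (update P i σ)
      - dupleRule D x y (update P i σ))).1 ?_
    rw [sub_sub_sub_comm]
    exact hr P

/-- The unordered pairs of distinct candidates, each listed in increasing order. -/
abbrev CandidatePair (m : ℕ) : Type := {p : Fin m × Fin m // p.1 < p.2}

lemma CandidatePair.eq_of_mk_eq {p q : CandidatePair m}
    (h : s(p.1.1, p.1.2) = s(q.1.1, q.1.2)) : p = q := by
  obtain ⟨h₁, h₂⟩ | ⟨h₁, h₂⟩ := Sym2.eq_iff.1 h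
  · exact Subtype.ext (Prod.ext h₁ h₂)
  · exact absurd p.2 (by simpa [h₁, h₂] using q.2.le)

lemma CandidatePair.exists_mk_eq (hxy : x ≠ y) :
    ∃ p : CandidatePair m, s(p.1.1, p.1.2) = s(x, y) := by
  obtain h | h := hxy.lt_or_gt
  · exact ⟨⟨(x, y), h⟩, rfl⟩
  · exact ⟨⟨(y, x), h⟩, Sym2.eq_swap⟩

lemma LocallyMonotone.exists_residual (hF : LocallyMonotone F) :
    ∃ D : CandidatePair m → Finset ι → ℝ, (∀ p, D p ∅ = 0) ∧ (∀ p, Monotone (D p)) ∧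
      ∀ i σ z w, σ z ⋖ σ w → ∃ r : ℝ, 0 ≤ r ∧ ∀ P,
        (F (update P i (σ * swap z w)) -
            ∑ p, dupleRule (D p) p.1.1 p.1.2 (update P i (σ * swap z w)))
          - (F (update P i σ) - ∑ p, dupleRule (D p) p.1.1 p.1.2 (update P i σ))
            = r • transfer z w := by
  choose D hD₀ hD hr using fun p : CandidatePair m => hF.exists_dupleRule p.2.ne
  refine ⟨D, hD₀, hD, fun i σ z w h => ?_⟩
  obtain ⟨p, hp⟩ := CandidatePair.exists_mk_eq (ne_of_apply_ne σ h.lt.ne)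
  obtain ⟨r, hr₀, hr⟩ := hr p i σ z w h hp
  refine ⟨r, hr₀, fun P => ?_⟩
  rw [sub_sub_sub_comm, ← sum_sub_distrib, Fintype.sum_eq_single p fun q hq => ?_, hr]
  rw [dupleRule_update_mul_swap_of_ne h fun e => hq (CandidatePair.eq_of_mk_eq (e.trans hp.symm)),
    sub_self]

lemma exists_separation {R : (ι → Perm (Fin m)) → Fin m → ℝ}
    (hR : ∀ i σ x y, σ x ⋖ σ y → ∃ r : ℝ, 0 ≤ r ∧ ∀ P,
      R (update P i (σ * swap x y)) - R (update P i σ) = r • transfer x y) :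
    ∃ V : ι → Perm (Fin m) → Fin m → ℝ, (∀ i, SwapMonotone (V i)) ∧
      ∀ P Q, R P - R Q = ∑ i, V i (P i) - ∑ i, V i (Q i) := by
  let V (i : ι) (σ : Perm (Fin m)) : Fin m → ℝ := R (update 1 i σ)
  refine ⟨V, fun i σ x y h => (hR i σ x y h).imp fun r hr => ⟨hr.1, hr.2 1⟩, fun P Q => ?_⟩
  have hconst : ∀ P i σ τ, R (update P i σ) - V i σ = R (update P i τ) - V i τ := fun P i =>
    eq_of_mul_swap_eq fun σ x y h => by
      obtain ⟨r, -, hr⟩ := hR i σ x y h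
      rw [sub_eq_sub_iff_sub_eq_sub, hr, ← hr 1]
  suffices h : R P - ∑ i, V i (P i) = R Q - ∑ i, V i (Q i) by
    rwa [sub_eq_sub_iff_sub_eq_sub] at h
  refine eq_of_update_eq (r := fun _ _ _ => True) (g := fun P => R P - ∑ i, V i (P i)) ?_
    fun _ => trivial
  intro P i σ _
  have hrest : ∑ j ∈ univ.erase i, V j (update P i σ j) = ∑ j ∈ univ.erase i, V j (P j) :=
    sum_congr rfl fun j hj => by rw [Function.update_of_ne (ne_of_mem_erase hj)]
  have hσ := hconst P i σ (P i)
  rw [Function.update_eq_self] at hσ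
  simp only [← add_sum_erase univ _ (mem_univ i), hrest, Function.update_self]
  rw [← sub_sub, hσ, sub_sub]

theorem LocallyMonotone.exists_decomposition [Nonempty ι] (hF : LocallyMonotone F)
    (hF₀ : ∀ P, 0 ≤ F P) (hm : 0 < m) :
    ∃ (U : ι → Perm (Fin m) → Fin m → ℝ) (D : CandidatePair m → Finset ι → ℝ),
      (∀ i, SwapMonotone (U i)) ∧ (∀ i σ, 0 ≤ U i σ) ∧
      (∀ p, D p ∅ = 0) ∧ (∀ p, Monotone (D p)) ∧
      ∀ P, F P = ∑ i, U i (P i) + ∑ p, dupleRule (D p) p.1.1 p.1.2 P := by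
  obtain ⟨D, hD₀, hD, hR⟩ := hF.exists_residual
  obtain ⟨V, hV, hFV⟩ := exists_separation
    (R := fun P => F P - ∑ p, dupleRule (D p) p.1.1 p.1.2 P) hR
  have : NeZero m := ⟨hm.ne'⟩
  let β (z : Fin m) : Perm (Fin m) := swap z 0
  have hβ : ∀ z w, β z z ≤ β z w := fun z w => by simp [β]
  let U (i : ι) (σ : Perm (Fin m)) (z : Fin m) : ℝ :=
    V i σ z - V i (β z) z + F (fun _ => β z) z / Fintype.card ι
  refine ⟨U, D, fun i σ x y h => (hV i σ x y h).imp fun r hr => ⟨hr.1, ?_⟩, fun i σ z => ?_,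
    hD₀, hD, fun P => ?_⟩
  · rw [← hr.2]
    ext z
    simp [U]
  · exact add_nonneg (sub_nonneg.2 ((hV i).apply_le_of_forall_le (hβ z) σ))
      (div_nonneg (hF₀ _ z) (Nat.cast_nonneg _))
  · ext z
    have hduple : ∑ p, dupleRule (D p) p.1.1 p.1.2 (fun _ : ι => β z) z = 0 :=
      sum_eq_zero fun p _ =>
        dupleRule_apply_eq_zero_of_forall_le p.2.ne (hD₀ p) fun _ => hβ z
    have hz := congrFun (hFV P fun _ => β z) z
    simp only [Pi.sub_apply, Finset.sum_apply, hduple] at hz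
    have hcard : (Fintype.card ι : ℝ) ≠ 0 := Nat.cast_ne_zero.2 Fintype.card_ne_zero
    simp only [Pi.add_apply, Finset.sum_apply, U, sum_add_distrib, sum_sub_distrib, sum_const,
      card_univ, nsmul_eq_mul, mul_div_cancel₀ _ hcard]
    linarith

end Decomposition

section Normalize

variable {m : ℕ} {v : Fin m → ℝ}

/-- The affine rescaling of a utility function to one with minimum `0` and maximum `1`; it is
meaningful for nonconstant `v`. -/
noncomputable def normalize (v : Fin m → ℝ) : Fin m → ℝ :=
  fun j => (v j - ⨅ k, v k) / ((⨆ k, v k) - ⨅ k, v k)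

lemma iInf_lt_iSup_of_injective (hm : 2 ≤ m) (hv : Function.Injective v) :
    ⨅ k, v k < ⨆ k, v k := by
  have : Nontrivial (Fin m) := Fin.nontrivial_iff_two_le.2 hm
  obtain ⟨x, y, hxy⟩ := exists_pair_ne (Fin m)
  have hbdd := Set.finite_range v
  refine lt_of_not_ge fun h => hxy (hv ?_)
  have hx := ciInf_le hbdd.bddBelow x
  have hx' := le_ciSup hbdd.bddAbove x
  have hy := ciInf_le hbdd.bddBelow y
  have hy' := le_ciSup hbdd.bddAbove y
  linarith

lemma normalize_lt_normalize_iff (hm : 2 ≤ m) (hv : Function.Injective v) {x y : Fin m} :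
    normalize v x < normalize v y ↔ v x < v y := by
  rw [normalize, normalize, div_lt_div_iff_of_pos_right
    (sub_pos.2 (iInf_lt_iSup_of_injective hm hv)), sub_lt_sub_iff_right]

lemma isPrefU_normalize (hm : 2 ≤ m) (hv : Function.Injective v) : IsPrefU (normalize v) := by
  have : Nonempty (Fin m) := ⟨⟨0, by omega⟩⟩
  have hpos := sub_pos.2 (iInf_lt_iSup_of_injective hm hv)
  have hbdd := Set.finite_range v
  obtain ⟨j₀, hj₀⟩ := exists_eq_ciInf_of_finite (f := v)
  obtain ⟨j₁, hj₁⟩ := exists_eq_ciSup_of_finite (f := v)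
  refine ⟨⟨fun j => ⟨?_, ?_⟩, ⟨j₀, ?_⟩, ⟨j₁, ?_⟩⟩, fun x y hxy => ?_⟩
  · exact div_nonneg (sub_nonneg.2 (ciInf_le hbdd.bddBelow j)) hpos.le
  · exact div_le_one_of_le₀ (sub_le_sub_right (le_ciSup hbdd.bddAbove j) _) hpos.le
  · simp [normalize, hj₀]
  · simp only [normalize, hj₁, div_self hpos.ne']
  · exact hv (sub_left_inj.1 ((div_left_inj' hpos.ne').1 hxy))

lemma dotProduct_normalize_le_iff (hm : 2 ≤ m) (hv : Function.Injective v) {p q : Fin m → ℝ}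
    (hpq : ∑ j, p j = ∑ j, q j) :
    p ⬝ᵥ normalize v ≤ q ⬝ᵥ normalize v ↔ p ⬝ᵥ v ≤ q ⬝ᵥ v := by
  have hpos := sub_pos.2 (iInf_lt_iSup_of_injective hm hv)
  have hdot : ∀ p : Fin m → ℝ, p ⬝ᵥ normalize v
      = (p ⬝ᵥ v - (∑ j, p j) * ⨅ k, v k) / ((⨆ k, v k) - ⨅ k, v k) := fun p => by
    simp only [dotProduct, normalize, mul_div_assoc', mul_sub, ← Finset.sum_div,
      sum_sub_distrib, sum_mul]
  rw [hdot, hdot, div_le_div_iff_of_pos_right hpos, hpq, sub_le_sub_iff_right]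

end Normalize

section Represents

variable {m : ℕ} {v : Fin m → ℝ} {σ τ : Perm (Fin m)}

/-- The utility function `v` orders the candidates as the ranking `σ` does. -/
def Represents (v : Fin m → ℝ) (σ : Perm (Fin m)) : Prop :=
  ∀ x y, v x < v y ↔ σ x < σ y

lemma represents_of_forall_lt (h : ∀ x y, σ x < σ y → v x < v y) : Represents v σ := by
  have hmono : StrictMono (v ∘ σ.symm) := fun a b hab => h _ _ (by simpa using hab)
  intro x y
  simpa using hmono.lt_iff_lt (a := σ x) (b := σ y)

lemma Represents.injective (h : Represents v σ) : Function.Injective v := fun x y hxy =>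
  σ.injective (le_antisymm (not_lt.1 fun hlt => ((h y x).2 hlt).ne' hxy)
    (not_lt.1 fun hlt => ((h x y).2 hlt).ne hxy))

lemma Represents.monovary (h : Represents v σ) : Monovary v σ := fun x y hxy =>
  ((h x y).2 hxy).le

lemma Represents.unique (hσ : Represents v σ) (hτ : Represents v τ) : σ = τ := by
  by_contra hne
  obtain ⟨x, y, hxy, hyx⟩ := exists_covBy_of_ne hne
  exact ((hσ x y).2 hxy.lt).asymm ((hτ y x).2 hyx)

lemma Represents.normalize (hm : 2 ≤ m) (h : Represents v σ) :
    Represents (normalize v) σ := fun x y =>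
  (normalize_lt_normalize_iff hm h.injective).trans (h x y)

lemma represents_add_mul (hv : Monovary v σ) {ε : ℝ} (hε : 0 < ε) :
    Represents (fun j => v j + ε * (σ j : ℝ)) σ :=
  represents_of_forall_lt fun x y hxy => by
    have hlt : (σ x : ℝ) < σ y := by exact_mod_cast hxy
    exact add_lt_add_of_le_of_lt (hv hxy) (mul_lt_mul_of_pos_left hlt hε)

-- Utility functions with ties are limits of tie-free ones.
lemma dotProduct_le_of_monovary (hm : 2 ≤ m) {p q : Fin m → ℝ} (hpq : ∑ j, p j = ∑ j, q j)
    (h : ∀ v, IsPrefU v → Represents v σ → p ⬝ᵥ v ≤ q ⬝ᵥ v) (hv : Monovary v σ) :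
    p ⬝ᵥ v ≤ q ⬝ᵥ v := by
  let w (ε : ℝ) (j : Fin m) : ℝ := v j + ε * (σ j : ℝ)
  have hw : ∀ ε > 0, p ⬝ᵥ w ε ≤ q ⬝ᵥ w ε := fun ε hε => by
    have hrep : Represents (w ε) σ := represents_add_mul hv hε
    exact (dotProduct_normalize_le_iff hm hrep.injective hpq).1
      (h _ (isPrefU_normalize hm hrep.injective) (hrep.normalize hm))
  have hcont : ∀ p : Fin m → ℝ, Continuous fun ε => p ⬝ᵥ w ε := fun p => by
    simp only [dotProduct, w]
    fun_prop
  have hlim := le_of_tendsto_of_tendsto ((hcont p).continuousWithinAt (s := Set.Ioi 0) (x := 0))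
    ((hcont q).continuousWithinAt (s := Set.Ioi 0) (x := 0))
    (eventually_mem_nhdsWithin.mono hw)
  simpa [w] using hlim

/-- The ranking of the candidates by increasing utility. -/
noncomputable def ranking (v : Fin m → ℝ) : Perm (Fin m) := (Tuple.sort v)⁻¹

lemma represents_ranking (hv : Function.Injective v) : Represents v (ranking v) := by
  have hmono : StrictMono (v ∘ Tuple.sort v) :=
    (Tuple.monotone_sort v).strictMono_of_injective (hv.comp (Tuple.sort v).injective)
  intro x y
  simpa [ranking] using hmono.lt_iff_lt (a := (Tuple.sort v)⁻¹ x) (b := (Tuple.sort v)⁻¹ y)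

/-- A normalized utility function representing the ranking `σ`. -/
noncomputable def utility (σ : Perm (Fin m)) : Fin m → ℝ := normalize fun j => (σ j : ℝ)

lemma represents_utility (hm : 2 ≤ m) (σ : Perm (Fin m)) : Represents (utility σ) σ :=
  Represents.normalize hm fun x y => by simp

lemma isPrefU_utility (hm : 2 ≤ m) (σ : Perm (Fin m)) : IsPrefU (utility σ) :=
  isPrefU_normalize hm fun x y hxy => σ.injective (Fin.ext (by simpa using hxy))

end Represents

section Rules

variable {n m : ℕ} {J : (Fin n → Fin m → ℝ) → Fin m → ℝ}
  {G : (Fin n → Perm (Fin m)) → Fin m → ℝ}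

/-- The function of profiles of rankings induced by a mechanism: each ranking is replaced by a
utility function representing it. -/
noncomputable def toRule (J : (Fin n → Fin m → ℝ) → Fin m → ℝ)
    (P : Fin n → Perm (Fin m)) : Fin m → ℝ :=
  J (utility ∘ P)

/-- The mechanism that applies `G` to the rankings of the voters. -/
noncomputable def ofRule (G : (Fin n → Perm (Fin m)) → Fin m → ℝ)
    (u : Fin n → Fin m → ℝ) : Fin m → ℝ :=
  G (ranking ∘ u)

lemma isProfileU_utility (hm : 2 ≤ m) (P : Fin n → Perm (Fin m)) : IsProfileU (utility ∘ P) :=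
  fun i => isPrefU_utility hm (P i)

lemma isProfileU_update {u : Fin n → Fin m → ℝ} (hu : IsProfileU u) (i : Fin n) {v : Fin m → ℝ}
    (hv : IsPrefU v) : IsProfileU (update u i v) := fun j => by
  obtain rfl | hj := eq_or_ne j i
  · simpa using hv
  · simpa [hj] using hu j

lemma eq_toRule (hm : 2 ≤ m) (hJ : OrdinalMech J) {u : Fin n → Fin m → ℝ} (hu : IsProfileU u)
    {P : Fin n → Perm (Fin m)} (h : ∀ i, Represents (u i) (P i)) : J u = toRule J P :=
  hJ _ _ hu (isProfileU_utility hm P) fun i x y =>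
    (h i x y).trans (represents_utility hm (P i) x y).symm

lemma locallyMonotone_toRule (hm : 2 ≤ m) (hJ : MechU J) (hOrd : OrdinalMech J)
    (hT : Truthful J) : LocallyMonotone (toRule J) := by
  intro P i
  refine swapMonotone_of_dotProduct_le fun σ τ v hv => ?_
  have hsum : ∀ P, ∑ j, toRule J P j = 1 := fun P => (hJ _ (isProfileU_utility hm P)).2
  refine dotProduct_le_of_monovary hm ((hsum _).trans (hsum _).symm) (fun v hv hvτ => ?_) hv
  have hprofile : IsProfileU (update (utility ∘ P) i v) :=
    isProfileU_update (isProfileU_utility hm P) i hv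
  have hτ : J (update (utility ∘ P) i v) = toRule J (update P i τ) :=
    eq_toRule hm hOrd hprofile fun j => by
      obtain rfl | hj := eq_or_ne j i
      · simpa using hvτ
      · simpa [hj] using represents_utility hm (P j)
  have hσ : update (update (utility ∘ P) i v) i (utility σ) = utility ∘ update P i σ := by
    rw [Function.update_idem, Function.comp_update]
  have htruthful := hT _ hprofile i (utility σ) (isPrefU_utility hm σ)
  rwa [hσ, Function.update_self, hτ] at htruthful

lemma truthful_ofRule (hG : LocallyMonotone G) : Truthful (ofRule G) := by
  intro u hu i v _
  have h := (hG (ranking ∘ u) i).dotProduct_le (represents_ranking (hu i).2).monovary (ranking v)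
  rw [← Function.comp_update, ← Function.comp_update, Function.update_eq_self] at h
  exact h

lemma ordinalMech_ofRule : OrdinalMech (ofRule G) := by
  intro u u' hu hu' h
  have hranking : ranking ∘ u = ranking ∘ u' := funext fun i =>
    Represents.unique (represents_ranking (hu i).2)
      fun x y => (h i x y).trans (represents_ranking (hu' i).2 x y)
  rw [ofRule, ofRule, hranking]

lemma unilateral_ofRule (U : Perm (Fin m) → Fin m → ℝ) (i : Fin n) :
    Unilateral (ofRule fun P : Fin n → Perm (Fin m) => U (P i)) :=
  ⟨i, fun u u' _ _ h => by simp only [ofRule, Function.comp_apply, h]⟩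

lemma duple_ofRule_dupleRule (D : Finset (Fin n) → ℝ) {x y : Fin m} (hxy : x ≠ y) :
    Duple (ofRule (dupleRule D x y)) :=
  ⟨x, y, hxy, fun _ _ _ hx hy => dupleRule_apply_of_ne hx hy⟩

end Rules

section ConvexCombination

variable {n m : ℕ}

lemma convexCombOf_of_eq_sum {κ : Type*} [Fintype κ]
    {Q : ((Fin n → Fin m → ℝ) → Fin m → ℝ) → Prop} (hQ : ∀ K (a : ℝ), 0 ≤ a → Q K → Q (a • K))
    {J : (Fin n → Fin m → ℝ) → Fin m → ℝ} (hJ : MechU J)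
    {K : κ → (Fin n → Fin m → ℝ) → Fin m → ℝ} (hK : ∀ k, Q (K k))
    (hnonneg : ∀ k u, IsProfileU u → 0 ≤ K k u)
    {c : κ → ℝ} (htotal : ∀ k u, IsProfileU u → ∑ j, K k u j = c k)
    (hsum : ∀ u, IsProfileU u → J u = ∑ k, K k u) {u₀ : Fin n → Fin m → ℝ} (hu₀ : IsProfileU u₀) :
    ConvexCombOf J fun K => MechU K ∧ Q K := by
  classical
  have hc : ∀ k, 0 ≤ c k := fun k => by
    rw [← htotal k u₀ hu₀]
    exact sum_nonneg fun j _ => hnonneg k u₀ hu₀ j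
  have hzero : ∀ k, c k = 0 → ∀ u, IsProfileU u → K k u = 0 := fun k hk u hu => by
    have h := (Fintype.sum_eq_zero_iff_of_nonneg (hnonneg k u hu)).1
    exact h ((htotal k u hu).trans hk)
  let e : Fin (Fintype.card {k // c k ≠ 0}) ≃ {k // c k ≠ 0} := (Fintype.equivFin _).symm
  have hsum_e : ∀ f : κ → ℝ, (∀ k, c k = 0 → f k = 0) → ∑ k, f (e k) = ∑ k, f k := fun f hf =>
    Fintype.sum_of_injective (fun k => (e k : κ)) (Subtype.val_injective.comp e.injective) _ _
      (fun k hk => hf k (by_contra fun h => hk ⟨e.symm ⟨k, h⟩, by simp⟩)) fun _ => rfl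
  refine ⟨_, fun k => (c (e k))⁻¹ • K (e k), fun k => c (e k),
    fun k => ⟨fun u hu => ⟨fun j => ?_, ?_⟩, hQ _ _ (inv_nonneg.2 (hc (e k))) (hK (e k))⟩,
    fun k => hc (e k), ?_, fun u hu j => ?_⟩
  · exact mul_nonneg (inv_nonneg.2 (hc _)) (hnonneg _ u hu j)
  · simp only [Pi.smul_apply, smul_eq_mul, ← mul_sum, htotal _ u hu, inv_mul_cancel₀ (e k).2]
  · rw [hsum_e c fun _ => id, ← (hJ u₀ hu₀).2, hsum u₀ hu₀]
    simp only [Finset.sum_apply]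
    rw [sum_comm]
    simp only [htotal _ u₀ hu₀]
  · simp only [Pi.smul_apply, smul_eq_mul, mul_inv_cancel_left₀ (e _).2]
    rw [hsum_e (fun k => K k u j) fun k hk => congrFun (hzero k hk u hu) j, hsum u hu,
      Finset.sum_apply]

end ConvexCombination

end Gibbard

/-- Gibbard 1977: every ordinal truthful mechanism on tie-free
profiles is a convex combination of mechanisms each of which is either
unilateral, ordinal and truthful, or duple and truthful. -/
theorem stmt2 (n m : ℕ) (hn : 1 ≤ n) (hm : 2 ≤ m)
    (J : (Fin n → Fin m → ℝ) → Fin m → ℝ)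
    (hJ : MechU J) (hOrd : OrdinalMech J) (hT : Truthful J) :
    ConvexCombOf J (fun K => MechU K ∧
      ((Unilateral K ∧ OrdinalMech K ∧ Truthful K) ∨ (Duple K ∧ Truthful K))) := by
  open Gibbard in
  have : Nonempty (Fin n) := ⟨⟨0, hn⟩⟩
  have hF : LocallyMonotone (toRule J) := locallyMonotone_toRule hm hJ hOrd hT
  obtain ⟨U, D, hU, hU₀, hD₀, hD, hJeq⟩ := hF.exists_decomposition
    (fun P => (hJ _ (isProfileU_utility hm P)).1) (by omega)
  let G : Fin n ⊕ CandidatePair m → (Fin n → Equiv.Perm (Fin m)) → Fin m → ℝ :=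
    Sum.elim (fun i P => U i (P i)) fun p => dupleRule (D p) p.1.1 p.1.2
  have hG : ∀ k, LocallyMonotone (G k)
    | .inl i => (hU i).locallyMonotone i
    | .inr p => locallyMonotone_dupleRule (hD p)
  have hG₀ : ∀ k P, 0 ≤ G k P
    | .inl i, P => hU₀ i (P i)
    | .inr p, _ => dupleRule_nonneg (hD₀ p) (hD p)
  refine convexCombOf_of_eq_sum (K := fun k => ofRule (G k)) (fun K a ha hK => hK.imp
      (fun h => ⟨h.1.smul a, h.2.1.smul a, h.2.2.smul ha⟩) fun h => ⟨h.1.smul a, h.2.smul ha⟩)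
    hJ ?_ (fun k u _ => hG₀ k _) (fun k u _ => (hG k).sum_eq _ 1) (fun u hu => ?_)
    (isProfileU_utility hm 1)
  · rintro (i | p)
    · exact .inl ⟨unilateral_ofRule (U i) i, ordinalMech_ofRule, truthful_ofRule (hG (.inl i))⟩
    · exact .inr ⟨duple_ofRule_dupleRule (D p) p.2.ne, truthful_ofRule (hG (.inr p))⟩
  · rw [eq_toRule hm hOrd hu fun i => represents_ranking (hu i).2, Fintype.sum_sum_type]
    exact hJeq (ranking ∘ u)
end
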